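/- arXiv:1403.4861 — 4 statements merged into one kernel-verified Lean document; each statement's English description precedes it below -/
import Mathlib

section
/- Every planar graph with n vertices and m edges contains a matching of size at least (m − 2n)/3. -/
open SimpleGraph

/-- `H` is a minor of `G`: there are nonempty, pairwise disjoint, connected
branch sets in `G`, one for each vertex of `H`, such that adjacent vertices of
`H` have adjacent branch sets. -/
def SimpleGraph.HasMinor {V W : Type*} (G : SimpleGraph V) (H : SimpleGraph W) : Prop :=
  ∃ f : W → Set V,
    (∀ w, (f w).Nonempty) ∧
    (∀ w, (G.induce (f w)).Connected) ∧
    (Pairwise fun w₁ w₂ => Disjoint (f w₁) (f w₂)) ∧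
    (∀ w₁ w₂, H.Adj w₁ w₂ → ∃ v₁ ∈ f w₁, ∃ v₂ ∈ f w₂, G.Adj v₁ v₂)

/-- Wagner's characterization of planarity: a graph is planar iff it has
neither `K₅` nor `K₃,₃` as a minor. -/
def SimpleGraph.IsPlanar {V : Type*} (G : SimpleGraph V) : Prop :=
  ¬ G.HasMinor (completeGraph (Fin 5)) ∧
  ¬ G.HasMinor (completeBipartiteGraph (Fin 3) (Fin 3))

namespace PM
open Classical

/-- step relation inside `X` -/
def R {V : Type*} (G : SimpleGraph V) (X : Set V) (a b : V) : Prop :=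
  G.Adj a b ∧ a ∈ X ∧ b ∈ X

def Cn {V : Type*} (G : SimpleGraph V) (X : Set V) : Prop :=
  ∀ x ∈ X, ∀ y ∈ X, Relation.ReflTransGen (R G X) x y

theorem R_symm {V : Type*} {G : SimpleGraph V} {X : Set V} : ∀ a b, R G X a b → R G X b a :=
  fun _ _ h => ⟨h.1.symm, h.2.2, h.2.1⟩

theorem RT_symm {V : Type*} {G : SimpleGraph V} {X : Set V} {a b : V}
    (h : Relation.ReflTransGen (R G X) a b) : Relation.ReflTransGen (R G X) b a :=
  by
    induction h with
    | refl => exact .refl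
    | tail _ h2 ih => exact .head (R_symm _ _ h2) ih

theorem RT_lift {V : Type*} {p q : V → V → Prop} (hpq : ∀ a b, p a b → q a b) {a b : V}
    (h : Relation.ReflTransGen p a b) : Relation.ReflTransGen q a b := by
  induction h with
  | refl => exact .refl
  | tail _ h2 ih => exact ih.tail (hpq _ _ h2)

theorem RT_mono {V : Type*} {G : SimpleGraph V} {X Y : Set V} (hXY : X ⊆ Y) {a b : V}
    (h : Relation.ReflTransGen (R G X) a b) : Relation.ReflTransGen (R G Y) a b :=
  RT_lift (fun _ _ h => ⟨h.1, hXY h.2.1, hXY h.2.2⟩) h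

theorem Cn_of_center {V : Type*} {G : SimpleGraph V} {X : Set V} (u : V)
    (h : ∀ x ∈ X, Relation.ReflTransGen (R G X) u x) : Cn G X :=
  fun x hx y hy => (RT_symm (h x hx)).trans (h y hy)

theorem Cn_singleton {V : Type*} {G : SimpleGraph V} (u : V) : Cn G {u} := by
  intro x hx y hy
  rw [Set.mem_singleton_iff] at hx hy
  subst hx; subst hy; exact .refl

theorem Cn.connected {V : Type*} {G : SimpleGraph V} {X : Set V} (h : Cn G X)
    (hne : X.Nonempty) : (G.induce X).Connected := by
  have key : ∀ x y, Relation.ReflTransGen (R G X) x y → ∀ (hx : x ∈ X) (hy : y ∈ X),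
      (G.induce X).Reachable ⟨x, hx⟩ ⟨y, hy⟩ := by
    intro x y h
    induction h with
    | refl => intro _ _; exact Reachable.refl _
    | tail _ h2 ih =>
      intro hx hy
      refine (ih hx h2.2.1).trans (Adj.reachable ?_)
      simpa using h2.1
  have : Nonempty X := hne.to_subtype
  exact Connected.mk (fun a b => key a b (h a a.2 b b.2) a.2 b.2)

def Mn {V W : Type*} (G : SimpleGraph V) (S : Finset V) (H : SimpleGraph W) : Prop :=
  ∃ f : W → Set V,
    (∀ w, f w ⊆ S) ∧ (∀ w, (f w).Nonempty) ∧ (∀ w, Cn G (f w)) ∧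
    (Pairwise fun w₁ w₂ => Disjoint (f w₁) (f w₂)) ∧
    (∀ w₁ w₂, H.Adj w₁ w₂ → ∃ v₁ ∈ f w₁, ∃ v₂ ∈ f w₂, G.Adj v₁ v₂)

theorem Mn.hasMinor {V W : Type*} {G : SimpleGraph V} {S : Finset V} {H : SimpleGraph W}
    (h : Mn G S H) : G.HasMinor H := by
  obtain ⟨f, _, h2, h3, h4, h5⟩ := h
  exact ⟨f, h2, fun w => (h3 w).connected (h2 w), h4, h5⟩

theorem Mn.mono {V W : Type*} {G G' : SimpleGraph V} {S S' : Finset V} {H : SimpleGraph W}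
    (h : Mn G S H) (hG : G ≤ G') (hS : S ⊆ S') : Mn G' S' H := by
  obtain ⟨f, h1, h2, h3, h4, h5⟩ := h
  refine ⟨f, fun w => (h1 w).trans (by exact_mod_cast hS), h2, fun w x hx y hy => ?_, h4, ?_⟩
  · exact RT_lift (fun _ _ h => ⟨hG h.1, h.2⟩) (h3 w x hx y hy)
  · intro a b hab
    obtain ⟨v, hv, w, hw, hvw⟩ := h5 a b hab
    exact ⟨v, hv, w, hw, hG hvw⟩

/-- merge `v` into `u` -/
def merge {V : Type*} (G : SimpleGraph V) (u v : V) : SimpleGraph V where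
  Adj x y := x ≠ v ∧ y ≠ v ∧ x ≠ y ∧ (G.Adj x y ∨ (x = u ∧ G.Adj v y) ∨ (y = u ∧ G.Adj v x))
  symm := ⟨by
    rintro x y ⟨h1, h2, h3, h4⟩
    refine ⟨h2, h1, h3.symm, ?_⟩
    rcases h4 with h | h | h
    · exact Or.inl h.symm
    · exact Or.inr (Or.inr h)
    · exact Or.inr (Or.inl h)⟩
  loopless := ⟨fun x h => h.2.2.1 rfl⟩

theorem Mn.of_merge {V W : Type*} {G : SimpleGraph V} {S S' : Finset V} {H : SimpleGraph W}
    {u v : V} {X : Set V} (hu : u ∈ X) (hv : v ∈ X) (hX : Cn G X) (hXS : X ⊆ S')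
    (hSS : S ⊆ S') (hd : ∀ x ∈ X, x ∈ S → x = u)
    (h : Mn (merge G u v) S H) : Mn G S' H := by
  obtain ⟨f, h1, h2, h3, h4, h5⟩ := h
  set g : W → Set V := fun w => if u ∈ f w then f w ∪ X else f w with hg
  have hfg : ∀ w, f w ⊆ g w := by
    intro w; simp only [hg]; split_ifs
    · exact Set.subset_union_left
    · exact subset_rfl
  have hXg : ∀ w, u ∈ f w → X ⊆ g w := by
    intro w hw; simp only [hg, if_pos hw]; exact Set.subset_union_right
  have hgm : ∀ w x, x ∈ g w → x ∈ f w ∨ (u ∈ f w ∧ x ∈ X) := by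
    intro w x hx
    by_cases huw : u ∈ f w
    · simp only [hg, if_pos huw] at hx
      rcases hx with h | h
      · exact Or.inl h
      · exact Or.inr ⟨huw, h⟩
    · simp only [hg, if_neg huw] at hx; exact Or.inl hx
  have huX : ∀ w, u ∈ f w → ∀ x ∈ X, Relation.ReflTransGen (R G (g w)) u x :=
    fun w hw x hx => RT_mono (hXg w hw) (hX u hu x hx)
  have step : ∀ w a b, R (merge G u v) (f w) a b → Relation.ReflTransGen (R G (g w)) a b := by
    rintro w a b ⟨⟨_, _, _, hab⟩, ha, hb⟩
    rcases hab with h | ⟨rfl, h⟩ | ⟨rfl, h⟩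
    · exact .single ⟨h, hfg w ha, hfg w hb⟩
    · exact (huX w ha v hv).tail ⟨h, hXg w ha hv, hfg w hb⟩
    · exact RT_symm ((huX w hb v hv).tail ⟨h, hXg w hb hv, hfg w ha⟩)
  have conn : ∀ w, ∀ x ∈ f w, ∀ y ∈ f w, Relation.ReflTransGen (R G (g w)) x y := by
    intro w x hx y hy
    have := h3 w x hx y hy
    clear hy
    induction this with
    | refl => exact .refl
    | tail _ hs ih => exact ih.trans (step w _ _ hs)
  refine ⟨g, ?_, fun w => (h2 w).mono (hfg w), ?_, ?_, ?_⟩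
  · intro w x hx
    rcases hgm w x hx with h | h
    · exact hSS (h1 w h)
    · exact hXS h.2
  · intro w
    by_cases huw : u ∈ f w
    · refine Cn_of_center u ?_
      intro x hx
      rcases hgm w x hx with h | h
      · exact conn w u huw x h
      · exact huX w huw x h.2
    · intro x hx y hy
      rcases hgm w x hx with h | h
      · rcases hgm w y hy with h' | h'
        · exact conn w x h y h'
        · exact absurd h'.1 huw
      · exact absurd h.1 huw
  · intro a b hab
    have hdis : Disjoint (f a) (f b) := h4 hab
    change Disjoint (g a) (g b)
    rw [Set.disjoint_left] at hdis ⊢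
    intro x hxa hxb
    rcases hgm a x hxa with h | h <;> rcases hgm b x hxb with h' | h'
    · exact hdis h h'
    · have := hd x h'.2 (h1 a h)
      subst this; exact hdis h h'.1
    · have := hd x h.2 (h1 b h')
      subst this; exact hdis h.1 h'
    · exact hdis h.1 h'.1
  · intro a b hab
    obtain ⟨x, hx, y, hy, _, _, _, h⟩ := h5 a b hab
    rcases h with h | ⟨rfl, h⟩ | ⟨rfl, h⟩
    · exact ⟨x, hfg a hx, y, hfg b hy, h⟩
    · exact ⟨v, hXg a hx hv, y, hfg b hy, h⟩
    · exact ⟨x, hfg a hx, v, hXg b hy hv, h.symm⟩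

noncomputable def nb {V : Type*} (G : SimpleGraph V) (S : Finset V) (v : V) : Finset V :=
  S.filter (fun w => G.Adj v w)

theorem mem_nb {V : Type*} {G : SimpleGraph V} {S : Finset V} {v w : V} :
    w ∈ nb G S v ↔ w ∈ S ∧ G.Adj v w := by simp [nb]

/-- twice the number of edges in `S` -/
noncomputable def e2 {V : Type*} (G : SimpleGraph V) (S : Finset V) : ℕ :=
  ∑ v ∈ S, (nb G S v).card

theorem e2_eq {V : Type*} (G : SimpleGraph V) (S : Finset V) :
    e2 G S = ((S ×ˢ S).filter (fun p => G.Adj p.1 p.2)).card := by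
  rw [Finset.card_filter, Finset.sum_product]
  exact Finset.sum_congr rfl fun x _ => Finset.card_filter _ _

theorem e2_congr {V : Type*} {G G' : SimpleGraph V} {S : Finset V}
    (h : ∀ x ∈ S, ∀ y ∈ S, G.Adj x y ↔ G'.Adj x y) : e2 G S = e2 G' S := by
  refine Finset.sum_congr rfl fun x hx => ?_
  congr 1
  ext y
  simp only [mem_nb]
  exact and_congr_right (fun hy => h x hx y hy)

theorem e2_insert {V : Type*} (G : SimpleGraph V) (S : Finset V) (v : V) (hv : v ∉ S) :
    e2 G (insert v S) = e2 G S + 2 * (nb G S v).card := by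
  have h1 : ∀ w, (nb G (insert v S) w).card = (nb G S w).card + if G.Adj v w then 1 else 0 := by
    intro w
    simp only [nb, Finset.filter_insert]
    by_cases h : G.Adj v w
    · rw [if_pos h.symm, if_pos h, Finset.card_insert_of_notMem (by simp [hv])]
    · rw [if_neg (fun h' => h h'.symm), if_neg h, add_zero]
  simp only [e2]
  rw [Finset.sum_insert hv, Finset.sum_congr rfl (fun w _ => h1 w), Finset.sum_add_distrib, h1]
  simp only [G.irrefl, if_false]
  rw [← Finset.card_filter]
  simp only [nb]; ring

theorem e2_erase {V : Type*} (G : SimpleGraph V) (S : Finset V) (v : V) (hv : v ∈ S) :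
    e2 G S = e2 G (S.erase v) + 2 * (nb G S v).card := by
  have h := e2_insert G (S.erase v) v (Finset.notMem_erase v S)
  rw [Finset.insert_erase hv] at h
  rw [h]
  congr 3
  ext x
  simp only [mem_nb, Finset.mem_erase]
  constructor
  · rintro ⟨⟨_, h⟩, h'⟩; exact ⟨h, h'⟩
  · rintro ⟨h, h'⟩; exact ⟨⟨h'.ne', h⟩, h'⟩

theorem e2_merge {V : Type*} (G : SimpleGraph V) (S : Finset V) (u v : V) (hu : u ∈ S)
    (hv : v ∈ S) (huv : u ≠ v) :
    e2 G S = e2 (merge G u v) (S.erase v) + 2 * (nb G (nb G S u) v).card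
      + (if G.Adj u v then 2 else 0) := by
  set T := (S.erase v).erase u with hT
  have hvT : v ∉ insert u T := by simp [hT, huv.symm]
  have huT : u ∉ T := by simp [hT]
  have hTu : insert u T = S.erase v := Finset.insert_erase (by simp [hu, huv])
  have hS : S = insert v (insert u T) := by rw [hTu, Finset.insert_erase hv]
  have h1 : e2 (merge G u v) T = e2 G T := by
    apply e2_congr
    intro x hx y hy
    have hxu : x ≠ u := fun h => huT (h ▸ hx)
    have hyu : y ≠ u := fun h => huT (h ▸ hy)
    have hxv : x ≠ v := fun h => hvT (Finset.mem_insert_of_mem (h ▸ hx))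
    have hyv : y ≠ v := fun h => hvT (Finset.mem_insert_of_mem (h ▸ hy))
    change (x ≠ v ∧ y ≠ v ∧ x ≠ y ∧ (G.Adj x y ∨ (x = u ∧ G.Adj v y) ∨ (y = u ∧ G.Adj v x))) ↔ _
    constructor
    · rintro ⟨_, _, _, h | h | h⟩
      · exact h
      · exact absurd h.1 hxu
      · exact absurd h.1 hyu
    · intro h; exact ⟨hxv, hyv, h.ne, Or.inl h⟩
  have h2 : nb (merge G u v) T u = nb G T u ∪ nb G T v := by
    ext y
    rw [mem_nb, Finset.mem_union, mem_nb, mem_nb]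
    change (y ∈ T ∧ (u ≠ v ∧ y ≠ v ∧ u ≠ y ∧ (G.Adj u y ∨ (u = u ∧ G.Adj v y) ∨ (y = u ∧ G.Adj v u)))) ↔ _
    constructor
    · rintro ⟨hy, _, _, h3, h | h | h⟩
      · exact Or.inl ⟨hy, h⟩
      · exact Or.inr ⟨hy, h.2⟩
      · exact absurd h.1.symm h3
    · have : ∀ hy : y ∈ T, u ≠ v ∧ y ≠ v ∧ u ≠ y := fun hy =>
        ⟨huv, fun h => hvT (Finset.mem_insert_of_mem (h ▸ hy)), fun h => huT (h ▸ hy)⟩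
      rintro (⟨hy, h⟩ | ⟨hy, h⟩)
      · exact ⟨hy, (this hy).1, (this hy).2.1, (this hy).2.2, Or.inl h⟩
      · exact ⟨hy, (this hy).1, (this hy).2.1, (this hy).2.2, Or.inr (Or.inl ⟨rfl, h⟩)⟩
  have h3 : nb G (nb G S u) v = nb G T u ∩ nb G T v := by
    ext y
    simp only [mem_nb, Finset.mem_inter, hT, Finset.mem_erase]
    constructor
    · rintro ⟨⟨a, b⟩, c⟩
      exact ⟨⟨⟨b.ne', c.ne', a⟩, b⟩, ⟨b.ne', c.ne', a⟩, c⟩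
    · rintro ⟨⟨⟨_, _, a⟩, b⟩, _, c⟩
      exact ⟨⟨a, b⟩, c⟩
  have h4 : (nb G (insert u T) v).card = (nb G T v).card + if G.Adj u v then 1 else 0 := by
    simp only [nb, Finset.filter_insert]
    by_cases h : G.Adj u v
    · rw [if_pos h.symm, if_pos h, Finset.card_insert_of_notMem (by simp [huT])]
    · rw [if_neg (fun h' => h h'.symm), if_neg h, add_zero]
  have h5 := Finset.card_union_add_card_inter (nb G T u) (nb G T v)
  rw [h3, ← hTu, e2_insert _ _ _ huT, h1, h2]
  conv_lhs => rw [hS]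
  rw [e2_insert _ _ _ hvT, e2_insert _ _ _ huT, h4]
  split_ifs <;> omega

theorem e2_mono {V : Type*} (G : SimpleGraph V) {S T : Finset V} (h : S ⊆ T) :
    e2 G S ≤ e2 G T := by
  rw [e2_eq, e2_eq]
  exact Finset.card_le_card (Finset.filter_subset_filter _ (Finset.product_subset_product h h))

theorem e2_le {V : Type*} (G : SimpleGraph V) (S : Finset V) :
    e2 G S ≤ S.card * (S.card - 1) := by
  refine Finset.sum_le_card_nsmul _ _ _ fun v hv => ?_
  rw [← Finset.card_erase_of_mem hv]
  apply Finset.card_le_card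
  intro x hx
  rw [mem_nb] at hx
  exact Finset.mem_erase.2 ⟨hx.2.ne', hx.1⟩

theorem exists_adj {V : Type*} (G : SimpleGraph V) (S : Finset V) (h : 0 < e2 G S) :
    ∃ u ∈ S, ∃ v ∈ S, G.Adj u v := by
  rw [e2_eq, Finset.card_pos] at h
  obtain ⟨p, hp⟩ := h
  simp only [Finset.mem_filter, Finset.mem_product] at hp
  exact ⟨p.1, hp.1.1, p.2, hp.1.2, hp.2⟩

theorem exists_sub {V : Type*} (S : Finset V) (k : ℕ) : ∀ (n : ℕ) (G : SimpleGraph V),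
    e2 G S = n → k ≤ n → ∃ G' ≤ G, k ≤ e2 G' S ∧ e2 G' S ≤ k + 1 := by
  intro n
  induction n using Nat.strong_induction_on with
  | _ n ih =>
    intro G hn hk
    by_cases hk2 : n ≤ k + 1
    · exact ⟨G, le_rfl, by omega, by omega⟩
    obtain ⟨u, hu, v, hv, huv⟩ := exists_adj G S (by omega)
    have hlt : e2 (G.deleteEdges {s(u, v)}) S + 2 = e2 G S := by
      rw [e2_eq, e2_eq]
      have : ((S ×ˢ S).filter (fun p => G.Adj p.1 p.2)) =
          ((S ×ˢ S).filter (fun p => (G.deleteEdges {s(u, v)}).Adj p.1 p.2)) ∪ {(u, v), (v, u)} := by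
        ext ⟨x, y⟩
        simp only [Finset.mem_filter, Finset.mem_product, deleteEdges_adj, Set.mem_singleton_iff,
          Finset.mem_union, Finset.mem_insert, Finset.mem_singleton, Prod.mk.injEq, Sym2.eq_iff]
        constructor
        · tauto
        · rintro (h | ⟨rfl, rfl⟩ | ⟨rfl, rfl⟩)
          · tauto
          · exact ⟨⟨hu, hv⟩, huv⟩
          · exact ⟨⟨hv, hu⟩, huv.symm⟩
      rw [this, Finset.card_union_of_disjoint, Finset.card_pair]
      · congr!
      · intro h; exact huv.ne (Prod.mk.inj h).1
      · rw [Finset.disjoint_left]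
        rintro ⟨x, y⟩ h1 h2
        simp only [Finset.mem_filter, deleteEdges_adj, Set.mem_singleton_iff, Finset.mem_insert,
          Finset.mem_singleton, Prod.mk.injEq, Sym2.eq_iff] at h1 h2
        tauto
    obtain ⟨G', h1, h2⟩ := ih (n - 2) (by omega) (G.deleteEdges {s(u, v)}) (by omega) (by omega)
    exact ⟨G', h1.trans (deleteEdges_le _), h2⟩

theorem contract {V W : Type*} {G : SimpleGraph V} {S : Finset V} {H : SimpleGraph W} {u v : V}
    (hu : u ∈ S) (hv : v ∈ S) (huv : G.Adj u v) (h : Mn (merge G u v) (S.erase v) H) :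
    Mn G S H := by
  refine Mn.of_merge (u := u) (v := v) (X := {u, v}) (by simp) (by simp) ?_ ?_
    (Finset.erase_subset _ _) ?_ h
  · refine Cn_of_center u ?_
    rintro x (rfl | rfl)
    · exact .refl
    · exact .single ⟨huv, by simp, by simp⟩
  · rintro x (rfl | rfl)
    · exact hu
    · exact hv
  · rintro x (rfl | rfl) hx
    · rfl
    · simp at hx

theorem cone {V : Type*} {G : SimpleGraph V} {S : Finset V} {p : ℕ} {v : V} (hv : v ∈ S)
    (h : Mn G (nb G S v) (completeGraph (Fin p))) : Mn G S (completeGraph (Fin (p + 1))) := by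
  obtain ⟨f, h1, h2, h3, h4, h5⟩ := h
  have hvf : ∀ w, v ∉ f w := fun w hw => by
    have := h1 w hw
    rw [Finset.mem_coe, mem_nb] at this
    exact G.irrefl this.2
  have hadj : ∀ w, ∃ x ∈ f w, G.Adj v x := fun w => by
    obtain ⟨x, hx⟩ := h2 w
    have := h1 w hx
    rw [Finset.mem_coe, mem_nb] at this
    exact ⟨x, hx, this.2⟩
  refine ⟨Fin.cons {v} f, ?_, ?_, ?_, ?_, ?_⟩
  · intro w
    refine Fin.cases ?_ (fun i => ?_) w
    · simpa using hv
    · exact (h1 i).trans (by exact_mod_cast Finset.filter_subset _ _)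
  · intro w
    refine Fin.cases ?_ (fun i => ?_) w
    · simp
    · simpa using h2 i
  · intro w
    refine Fin.cases ?_ (fun i => ?_) w
    · simpa using Cn_singleton v
    · simpa using h3 i
  · intro a b
    refine Fin.cases ?_ (fun i => ?_) a <;> refine Fin.cases ?_ (fun j => ?_) b
    · intro h; exact absurd rfl h
    · intro _; simpa using hvf j
    · intro _; simpa using hvf i
    · intro h; simpa using h4 (fun h' => h (by rw [h']))
  · intro a b
    refine Fin.cases ?_ (fun i => ?_) a <;> refine Fin.cases ?_ (fun j => ?_) b
    · intro h; exact absurd h (SimpleGraph.irrefl _)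
    · intro _; simpa using hadj j
    · intro _
      obtain ⟨x, hx, h⟩ := hadj i
      exact ⟨x, by simpa using hx, v, by simp, h.symm⟩
    · intro h
      simpa using h5 i j (by simpa using h)

theorem K1 {V : Type*} {G : SimpleGraph V} {S : Finset V} {v : V} (hv : v ∈ S) :
    Mn G S (completeGraph (Fin 1)) :=
  ⟨fun _ => {v}, by simpa using hv, by simp, fun _ => Cn_singleton v,
    fun a b h => absurd (Subsingleton.elim a b) h, fun a b h => absurd (Subsingleton.elim a b) h.ne⟩

/-- nbhd degrees vs. e2 -/
theorem nb_comm {V : Type*} (G : SimpleGraph V) (S : Finset V) (u v : V) :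
    nb G (nb G S u) v = nb G (nb G S v) u := by
  ext x; simp only [mem_nb]; tauto

theorem e2_K3 {V : Type*} (n : ℕ) : ∀ (S : Finset V) (G : SimpleGraph V), S.card = n → 1 ≤ n →
    ¬ Mn G S (completeGraph (Fin 3)) → e2 G S + 2 ≤ 2 * n := by
  induction n with
  | zero => intro _ _ _ h; omega
  | succ n ih =>
    intro S G hS _ hM
    by_contra hc
    obtain ⟨u, hu, v, hv, huv⟩ := exists_adj G S (by omega)
    have hm := e2_merge G S u v hu hv huv.ne
    rw [if_pos huv] at hm
    have hcard := Finset.card_erase_of_mem hv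
    have : 0 < (S.erase v).card := Finset.card_pos.2 ⟨u, by simp [hu, huv.ne]⟩
    by_cases ht : (nb G (nb G S u) v).card = 0
    · have := ih (S.erase v) (merge G u v) (by omega) (by omega) (fun h => hM (contract hu hv huv h))
      omega
    · obtain ⟨x, hx⟩ := Finset.card_pos.1 (Nat.pos_of_ne_zero ht)
      exact hM (cone hu (cone (v := v) (mem_nb.2 ⟨hv, huv⟩) (K1 hx)))

theorem e2_K4 {V : Type*} (n : ℕ) : ∀ (S : Finset V) (G : SimpleGraph V), S.card = n → 2 ≤ n →
    ¬ Mn G S (completeGraph (Fin 4)) → e2 G S + 6 ≤ 4 * n := by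
  induction n with
  | zero => intro _ _ _ h; omega
  | succ n ih =>
    intro S G hS hn hM
    by_contra hc
    by_cases hn2 : n = 1
    · have := e2_le G S
      subst hn2
      rw [hS] at this
      omega
    have ht : ∀ u ∈ S, ∀ v ∈ S, G.Adj u v → 2 ≤ (nb G (nb G S u) v).card := by
      intro u hu v hv huv
      by_contra ht
      have hm := e2_merge G S u v hu hv huv.ne
      rw [if_pos huv] at hm
      have hcard := Finset.card_erase_of_mem hv
      have := ih (S.erase v) (merge G u v) (by omega) (by omega) (fun h => hM (contract hu hv huv h))
      omega
    obtain ⟨u, hu, v, hv, huv⟩ := exists_adj G S (by omega)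
    have hpos : 0 < (nb G S u).card := Finset.card_pos.2 ⟨v, mem_nb.2 ⟨hv, huv⟩⟩
    have h1 : (nb G S u).card * 2 ≤ e2 G (nb G S u) := by
      rw [← smul_eq_mul]
      refine Finset.card_nsmul_le_sum _ _ _ fun x hx => ?_
      rw [mem_nb] at hx
      exact ht u hu x hx.1 hx.2
    have := e2_K3 _ (nb G S u) G rfl hpos (fun h => hM (cone hu h))
    omega

theorem e2_K5 {V : Type*} (n : ℕ) : ∀ (S : Finset V) (G : SimpleGraph V), S.card = n → 3 ≤ n →
    ¬ Mn G S (completeGraph (Fin 5)) → e2 G S + 12 ≤ 6 * n := by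
  induction n with
  | zero => intro _ _ _ h; omega
  | succ n ih =>
    intro S G hS hn hM
    by_contra hc
    by_cases hn2 : n = 2
    · have := e2_le G S
      subst hn2
      rw [hS] at this
      omega
    obtain ⟨G', hG', hk1, hk2⟩ := exists_sub S (6 * (n + 1) - 11) _ G rfl (by omega)
    replace hM : ¬ Mn G' S (completeGraph (Fin 5)) := fun h => hM (h.mono hG' subset_rfl)
    clear hc
    have ht : ∀ u ∈ S, ∀ v ∈ S, G'.Adj u v → 3 ≤ (nb G' (nb G' S u) v).card := by
      intro u hu v hv huv
      by_contra ht
      have hm := e2_merge G' S u v hu hv huv.ne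
      rw [if_pos huv] at hm
      have hcard := Finset.card_erase_of_mem hv
      have := ih (S.erase v) (merge G' u v) (by omega) (by omega) (fun h => hM (contract hu hv huv h))
      omega
    obtain ⟨u, hu, hdeg⟩ : ∃ u ∈ S, (nb G' S u).card < 6 := by
      by_contra hcon
      push Not at hcon
      have : S.card * 6 ≤ e2 G' S := Finset.card_nsmul_le_sum _ _ _ hcon
      omega
    have hpos : 0 < (nb G' S u).card := by
      by_contra h0
      have h1 := e2_erase G' S u hu
      have hcard := Finset.card_erase_of_mem hu
      have := ih (S.erase u) G' (by omega) (by omega)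
        (fun h => hM (h.mono le_rfl (Finset.erase_subset _ _)))
      omega
    have h1 : (nb G' S u).card * 3 ≤ e2 G' (nb G' S u) := by
      rw [← smul_eq_mul]
      refine Finset.card_nsmul_le_sum _ _ _ fun x hx => ?_
      rw [mem_nb] at hx
      exact ht u hu x hx.1 hx.2
    obtain ⟨v, hv⟩ := Finset.card_pos.1 hpos
    have h4 : 4 ≤ (nb G' S u).card := by
      have h2 := ht u hu v (mem_nb.1 hv).1 (mem_nb.1 hv).2
      have h3 : (nb G' (nb G' S u) v).card ≤ ((nb G' S u).erase v).card := by
        apply Finset.card_le_card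
        intro x hx
        rw [mem_nb] at hx
        exact Finset.mem_erase.2 ⟨hx.2.ne', hx.1⟩
      rw [Finset.card_erase_of_mem hv] at h3
      omega
    have := e2_K4 _ (nb G' S u) G' rfl (by omega) (fun h => hM (cone hu h))
    omega

theorem e2_split {V : Type*} {G : SimpleGraph V} {S V1 V2 : Finset V} {a1 a2 x : V}
    (hS : ∀ y ∈ S, ∀ z ∈ S, G.Adj y z → (y ∈ V1 ∧ z ∈ V1) ∨ (y ∈ V2 ∧ z ∈ V2))
    (h1 : a1 ∈ V1) (h1' : a1 ∈ V2) (h2 : a2 ∈ V1) (h2' : a2 ∈ V2) (h3 : x ∈ V1) (h3' : x ∈ V2)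
    (h12 : a1 ≠ a2) (hx1 : G.Adj a1 x) (hx2 : G.Adj a2 x) :
    e2 G S + 4 ≤ e2 G V1 + e2 G V2 := by
  rw [e2_eq, e2_eq, e2_eq, ← Finset.card_union_add_card_inter]
  refine Nat.add_le_add ?_ ?_
  · apply Finset.card_le_card
    rintro ⟨y, z⟩ hp
    simp only [Finset.mem_filter, Finset.mem_product, Finset.mem_union] at hp ⊢
    have := hS y hp.1.1 z hp.1.2 hp.2
    tauto
  · have hsub : ({(a1, x), (x, a1), (a2, x), (x, a2)} : Finset (V × V)) ⊆
      ((V1 ×ˢ V1).filter (fun p => G.Adj p.1 p.2)) ∩ ((V2 ×ˢ V2).filter (fun p => G.Adj p.1 p.2)) := by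
      intro p hp
      simp only [Finset.mem_insert, Finset.mem_singleton] at hp
      simp only [Finset.mem_filter, Finset.mem_product, Finset.mem_inter]
      have := hx1.symm
      have := hx2.symm
      rcases hp with rfl | rfl | rfl | rfl <;> simp [*]
    have hc : ({(a1, x), (x, a1), (a2, x), (x, a2)} : Finset (V × V)).card = 4 := by
      have := hx1.ne
      have := hx1.ne'
      have := hx2.ne
      have := hx2.ne'
      have := h12.symm
      rw [Finset.card_insert_of_notMem, Finset.card_insert_of_notMem, Finset.card_insert_of_notMem,
        Finset.card_singleton] <;> simp [*]
    rw [← hc]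
    exact Finset.card_le_card hsub

/-- the separation case -/
theorem sep_case {V : Type*} {G : SimpleGraph V} {S K : Finset V} {n : ℕ} {a1 a2 b x x' : V}
    (ih : ∀ T ⊆ S, T.card < n → 3 ≤ T.card → e2 G T + 8 ≤ 4 * T.card)
    (hS : S.card = n)
    (hKS : K ⊆ S) (h1 : a1 ∈ S) (h2 : a2 ∈ S) (hb : b ∈ S) (hx : x ∈ S) (hx' : x' ∈ S)
    (k1 : a1 ∉ K) (k2 : a2 ∉ K) (kb : b ∉ K) (kx : x ∉ K) (kx' : x' ∉ K)
    (n12 : a1 ≠ a2) (n1b : a1 ≠ b) (n2b : a2 ≠ b) (nbx : b ≠ x) (nbx' : b ≠ x') (nxx : x ≠ x')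
    (e1 : G.Adj a1 x) (e2' : G.Adj a2 x) (e1' : G.Adj a1 x') (e2'' : G.Adj a2 x')
    (hb3 : ∀ z ∈ S, G.Adj b z → z = a1 ∨ z = a2 ∨ z ∈ K)
    (hK : ∀ y ∈ K, ∀ z ∈ S, G.Adj y z → z = a1 ∨ z = a2 ∨ z = b ∨ z = x ∨ z ∈ K) :
    e2 G S + 8 ≤ 4 * n := by
  set V1 := K ∪ {b, a1, a2, x} with hV1
  set V2 := S \ (K ∪ {b}) with hV2
  have hxn1 := e1.ne'
  have hxn2 := e2'.ne'
  have hxn1' := e1'.ne'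
  have hxn2' := e2''.ne'
  have m1 : ∀ y, y ∈ V1 ↔ y ∈ K ∨ y = b ∨ y = a1 ∨ y = a2 ∨ y = x := by
    intro y; simp [hV1]; tauto
  have m2 : ∀ y, y ∈ V2 ↔ y ∈ S ∧ y ∉ K ∧ y ≠ b := by
    intro y; simp [hV2]; tauto
  have V1S : V1 ⊆ S := by
    intro y hy
    rw [m1] at hy
    rcases hy with h | rfl | rfl | rfl | rfl
    · exact hKS h
    all_goals assumption
  have V2S : V2 ⊆ S := Finset.sdiff_subset
  have cK : (K ∪ {b}).card = K.card + 1 := by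
    rw [Finset.card_union_of_disjoint (by simpa using kb)]; simp
  have c1 : V1.card = K.card + 4 := by
    rw [hV1, Finset.card_union_of_disjoint]
    · rw [Finset.card_insert_of_notMem, Finset.card_insert_of_notMem, Finset.card_insert_of_notMem,
        Finset.card_singleton]
      · simpa using hxn2.symm
      · simp [n12, hxn1.symm]
      · simp [n1b.symm, n2b.symm, nbx]
    · simp [k1, k2, kb, kx]
  have c2 : V2.card + (K.card + 1) = n := by
    rw [← cK, ← hS]
    apply Finset.card_sdiff_add_card_eq_card
    intro y hy
    simp only [Finset.mem_union, Finset.mem_singleton] at hy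
    rcases hy with h | rfl
    · exact hKS h
    · exact hb
  have c1lt : V1.card < n := by
    rw [← hS]
    apply Finset.card_lt_card
    refine ⟨V1S, fun h => ?_⟩
    have := h hx'
    rw [m1] at this
    rcases this with h | h | h | h | h
    · exact kx' h
    · exact nbx' h.symm
    · exact hxn1' h
    · exact hxn2' h
    · exact nxx h.symm
  have c2ge : 3 ≤ V2.card := by
    have : ({a1, a2, x} : Finset V) ⊆ V2 := by
      intro y hy
      simp only [Finset.mem_insert, Finset.mem_singleton] at hy
      rw [m2]
      rcases hy with rfl | rfl | rfl
      · exact ⟨h1, k1, n1b⟩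
      · exact ⟨h2, k2, n2b⟩
      · exact ⟨hx, kx, nbx.symm⟩
    have h := Finset.card_le_card this
    rwa [Finset.card_insert_of_notMem (by simp [n12, hxn1.symm]),
      Finset.card_insert_of_notMem (by simp [hxn2.symm]), Finset.card_singleton] at h
  have i1 := ih V1 V1S c1lt (by omega)
  have i2 := ih V2 V2S (by omega) c2ge
  have hsp := e2_split (G := G) (S := S) (V1 := V1) (V2 := V2) (a1 := a1) (a2 := a2) (x := x) ?_
    (by simp [m1]) (by simp [m2, *]) (by simp [m1]) (by simp [m2, *]) (by simp [m1])
    (by simp [m2, *, nbx.symm]) n12 e1 e2'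
  · omega
  · have key : ∀ y ∈ S, ∀ z ∈ S, G.Adj y z → (y ∈ K ∨ y = b) → y ∈ V1 ∧ z ∈ V1 := by
      intro y hy z hz hyz hyK
      rw [m1, m1]
      rcases hyK with h | rfl
      · have := hK y h z hz hyz
        tauto
      · have := hb3 z hz hyz
        tauto
    intro y hy z hz hyz
    by_cases hyK : y ∈ K ∨ y = b
    · exact Or.inl (key y hy z hz hyz hyK)
    by_cases hzK : z ∈ K ∨ z = b
    · exact Or.inl (key z hz y hy hyz.symm hzK).symm
    · right
      rw [m2, m2]
      tauto

theorem K33_mk {V : Type*} {G : SimpleGraph V} {S : Finset V} {K : Set V} {a1 a2 a3 p q r : V}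
    (hKS : K ⊆ S) (h1 : a1 ∈ S) (h2 : a2 ∈ S) (hp : p ∈ S) (hq : q ∈ S) (hr : r ∈ S)
    (hK : Cn G K) (h3 : a3 ∈ K) (k1 : a1 ∉ K) (k2 : a2 ∉ K) (kp : p ∉ K) (kq : q ∉ K) (kr : r ∉ K)
    (n12 : a1 ≠ a2) (npq : p ≠ q) (npr : p ≠ r) (nqr : q ≠ r)
    (e1p : G.Adj a1 p) (e1q : G.Adj a1 q) (e1r : G.Adj a1 r)
    (e2p : G.Adj a2 p) (e2q : G.Adj a2 q) (e2r : G.Adj a2 r)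
    (e3p : ∃ y ∈ K, G.Adj y p) (e3q : ∃ y ∈ K, G.Adj y q) (e3r : ∃ y ∈ K, G.Adj y r) :
    Mn G S (completeBipartiteGraph (Fin 3) (Fin 3)) := by
  have q1 := e1p.ne
  have q2 := e1q.ne
  have q3 := e1r.ne
  have q4 := e2p.ne
  have q5 := e2q.ne
  have q6 := e2r.ne
  set f : Fin 3 → Set V := ![{a1}, {a2}, K]
  set g : Fin 3 → V := ![p, q, r]
  have hfg : ∀ i j, ∃ y ∈ f i, G.Adj y (g j) := by
    intro i j
    fin_cases i <;> fin_cases j <;> simp [f, g, *]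
  refine ⟨Sum.elim f (fun j => {g j}), ?_, ?_, ?_, ?_, ?_⟩
  · rintro (i | i) <;> fin_cases i <;> simp [f, g, *]
  · rintro (i | i) <;> fin_cases i <;> simp [f, g]
    exact ⟨a3, h3⟩
  · rintro (i | i) <;> fin_cases i <;> simp [f, g, Cn_singleton]
    exact hK
  · have hd : ∀ i j, i ≠ j → Disjoint (f i) (f j) := by
      intro i j hij
      fin_cases i <;> fin_cases j <;> simp_all [f]
      exact fun h => n12 h.symm
    have hd2 : ∀ i j, g j ∉ f i := by
      intro i j
      fin_cases i <;> fin_cases j <;> simp [f, g, *] <;> exact Ne.symm (by assumption)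
    have hd3 : ∀ i j, i ≠ j → g i ≠ g j := by
      intro i j hij
      fin_cases i <;> fin_cases j <;> simp_all [g]
      all_goals exact Ne.symm (by assumption)
    rintro (i | i) (j | j) hij
    · exact hd i j (fun h => hij (by rw [h]))
    · simpa using hd2 i j
    · simpa using hd2 j i
    · simpa using hd3 i j (fun h => hij (by rw [h]))
  · rintro (i | i) (j | j) hij
    · simp at hij
    · simpa using hfg i j
    · obtain ⟨y, hy, h⟩ := hfg j i
      exact ⟨g i, by simp, y, hy, h.symm⟩
    · simp at hij

theorem e2_K33 {V : Type*} (c : V → Bool) (n : ℕ) : ∀ (S : Finset V) (G : SimpleGraph V),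
    (∀ x y, G.Adj x y → c x ≠ c y) → S.card = n → 3 ≤ n →
    ¬ Mn G S (completeBipartiteGraph (Fin 3) (Fin 3)) → e2 G S + 8 ≤ 4 * n := by
  induction n using Nat.strong_induction_on with
  | _ n ih =>
    intro S G hc hS hn hM
    have hcc : ∀ {x y z}, G.Adj x y → G.Adj x z → c y = c z := by
      intro x y z h1 h2
      have h1 := hc _ _ h1
      have h2 := hc _ _ h2
      revert h1 h2
      cases c x <;> cases c y <;> cases c z <;> simp
    have hnt : ∀ {x y z}, G.Adj x y → G.Adj x z → ¬ G.Adj y z :=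
      fun h1 h2 h3 => hc _ _ h3 (hcc h1 h2)
    by_cases hn3 : n = 3
    · by_contra hcon
      rw [hn3, Finset.card_eq_three] at hS
      obtain ⟨x, y, z, hxy, hxz, hyz, rfl⟩ := hS
      rw [e2_insert _ _ _ (by simp [hxy, hxz]), e2_insert _ _ _ (by simp [hyz])] at hcon
      have h0 := e2_le G {z}
      simp only [nb, Finset.filter_insert, Finset.filter_singleton] at hcon
      simp only [Finset.card_singleton] at h0
      by_cases a : G.Adj x y <;> by_cases b : G.Adj x z
      · have := hnt a b
        simp [a, b, this, hyz] at hcon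
        omega
      all_goals
        by_cases d : G.Adj y z <;> simp [a, b, d] at hcon <;> omega
    by_contra hcon
    obtain ⟨G', hG', hk1, hk2⟩ := exists_sub S (4 * n - 7) _ G rfl (by omega)
    replace hM : ¬ Mn G' S (completeBipartiteGraph (Fin 3) (Fin 3)) :=
      fun h => hM (h.mono hG' subset_rfl)
    replace hcc : ∀ {x y z}, G'.Adj x y → G'.Adj x z → c y = c z :=
      fun h1 h2 => hcc (hG' h1) (hG' h2)
    replace hnt : ∀ {x y z}, G'.Adj x y → G'.Adj x z → ¬ G'.Adj y z :=
      fun h1 h2 h3 => hnt (hG' h1) (hG' h2) (hG' h3)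
    replace hc : ∀ x y, G'.Adj x y → c x ≠ c y := fun x y h => hc x y (hG' h)
    clear hcon hG'
    clear G
    rename' G' => G
    obtain ⟨b, hb, hdeg⟩ : ∃ u ∈ S, (nb G S u).card < 4 := by
      by_contra hcon
      push Not at hcon
      have : S.card * 4 ≤ e2 G S := Finset.card_nsmul_le_sum _ _ _ hcon
      omega
    have hbe := e2_erase G S b hb
    have hbc := Finset.card_erase_of_mem hb
    have hb3 : (nb G S b).card = 3 := by
      by_contra h3
      have := ih (n - 1) (by omega) (S.erase b) G hc (by omega) (by omega)
        (fun h => hM (h.mono le_rfl (Finset.erase_subset _ _)))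
      omega
    obtain ⟨a1, a2, a3, n12, n13, n23, hN⟩ := Finset.card_eq_three.1 hb3
    have hmem : ∀ z, (z ∈ S ∧ G.Adj b z) ↔ z = a1 ∨ z = a2 ∨ z = a3 := by
      intro z; rw [← mem_nb, hN]; simp
    obtain ⟨s1, b1⟩ := (hmem a1).2 (by simp)
    obtain ⟨s2, b2⟩ := (hmem a2).2 (by simp)
    obtain ⟨s3, b3⟩ := (hmem a3).2 (by simp)
    have hn4 : n ≠ 4 := by
      intro hn4
      have hsub : nb G S b = S.erase b := by
        apply Finset.eq_of_subset_of_card_le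
        · intro x hx
          rw [mem_nb] at hx
          exact Finset.mem_erase.2 ⟨hx.2.ne', hx.1⟩
        · omega
      have h0 : e2 G (S.erase b) = 0 := by
        by_contra h0
        obtain ⟨u, hu, v, hv, huv⟩ := exists_adj G _ (Nat.pos_of_ne_zero h0)
        rw [← hsub, mem_nb] at hu hv
        exact hnt hu.2 hv.2 huv
      omega
    have hs1 : a1 ∈ S.erase b := Finset.mem_erase.2 ⟨b1.ne', s1⟩
    have hs2 : a2 ∈ S.erase b := Finset.mem_erase.2 ⟨b2.ne', s2⟩
    have hm := e2_merge G (S.erase b) a1 a2 hs1 hs2 n12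
    rw [if_neg (hnt b1 b2)] at hm
    have hmc := Finset.card_erase_of_mem hs2
    have ht : 1 < (nb G (nb G (S.erase b) a1) a2).card := by
      by_contra ht
      have := ih (n - 2) (by omega) ((S.erase b).erase a2) (merge G a1 a2) ?_ (by omega) (by omega) ?_
      · omega
      · rintro x y ⟨_, _, _, h | ⟨rfl, h⟩ | ⟨rfl, h⟩⟩
        · exact hc x y h
        · rw [hcc b1 b2]; exact hc _ _ h
        · rw [hcc b1 b2]; exact (hc _ _ h).symm
      · intro h
        refine hM (Mn.of_merge (u := a1) (v := a2) (X := {a1, b, a2}) (by simp) (by simp) ?_ ?_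
          ((Finset.erase_subset _ _).trans (Finset.erase_subset _ _)) ?_ h)
        · refine Cn_of_center b ?_
          rintro x (rfl | rfl | rfl)
          · exact .single ⟨b1, by simp, by simp⟩
          · exact .refl
          · exact .single ⟨b2, by simp, by simp⟩
        · rintro x (rfl | rfl | rfl) <;> assumption
        · rintro x (rfl | rfl | rfl) hx
          · rfl
          · simp at hx
          · simp at hx
    obtain ⟨x, hx, x', hx', nxx⟩ := Finset.one_lt_card.1 ht
    simp only [mem_nb, Finset.mem_erase] at hx hx'
    obtain ⟨⟨⟨nxb, sx⟩, x1⟩, x2⟩ := hx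
    obtain ⟨⟨⟨nxb', sx'⟩, x1'⟩, x2'⟩ := hx'
    have h3x : ∀ z, G.Adj a1 z → a3 ≠ z := by
      rintro z hz rfl
      exact hnt b1 b3 hz
    have ih' : ∀ T ⊆ S, T.card < n → 3 ≤ T.card → e2 G T + 8 ≤ 4 * T.card :=
      fun T hT h1 h2 => ih T.card h1 T G hc rfl h2 (fun h => hM (h.mono le_rfl hT))
    set P : Set V := {z | z ∈ S ∧ z ≠ a1 ∧ z ≠ a2 ∧ z ≠ b ∧ z ≠ x ∧ z ≠ x'} with hP
    have h3P : a3 ∈ P := ⟨s3, n13.symm, n23.symm, b3.ne', h3x x x1, h3x x' x1'⟩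
    set K : Finset V := S.filter (fun z => Relation.ReflTransGen (R G P) a3 z) with hK
    have hRP : ∀ z, Relation.ReflTransGen (R G P) a3 z → z ∈ P := by
      intro z hz
      induction hz with
      | refl => exact h3P
      | tail _ h _ => exact h.2.2
    have mK : ∀ z, z ∈ K ↔ Relation.ReflTransGen (R G P) a3 z := by
      intro z
      rw [hK, Finset.mem_filter]
      exact ⟨fun h => h.2, fun h => ⟨(hRP z h).1, h⟩⟩
    have KP : ∀ z ∈ K, z ∈ P := fun z hz => hRP z ((mK z).1 hz)
    have KS : K ⊆ S := Finset.filter_subset _ _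
    have h3K : a3 ∈ K := (mK a3).2 .refl
    have Kcl : ∀ y ∈ K, ∀ z ∈ P, G.Adj y z → z ∈ K := fun y hy z hz h =>
      (mK z).2 (((mK y).1 hy).tail ⟨h, KP y hy, hz⟩)
    have k1 : a1 ∉ K := fun h => (KP _ h).2.1 rfl
    have k2 : a2 ∉ K := fun h => (KP _ h).2.2.1 rfl
    have kb : b ∉ K := fun h => (KP _ h).2.2.2.1 rfl
    have kx : x ∉ K := fun h => (KP _ h).2.2.2.2.1 rfl
    have kx' : x' ∉ K := fun h => (KP _ h).2.2.2.2.2 rfl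
    have hb3' : ∀ z ∈ S, G.Adj b z → z = a1 ∨ z = a2 ∨ z ∈ K := by
      intro z hz h
      rcases (hmem z).1 ⟨hz, h⟩ with h | h | h
      · exact Or.inl h
      · exact Or.inr (Or.inl h)
      · exact Or.inr (Or.inr (h ▸ h3K))
    have Kn : ∀ y ∈ K, ∀ z ∈ S, G.Adj y z → z = a1 ∨ z = a2 ∨ z = b ∨ z = x ∨ z = x' ∨ z ∈ K := by
      intro y hy z hz h
      by_contra hcon
      push Not at hcon
      obtain ⟨c1, c2, c3, c4, c5, c6⟩ := hcon
      exact c6 (Kcl y hy z ⟨hz, c1, c2, c3, c4, c5⟩ h)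
    have hcon : ¬ (e2 G S + 8 ≤ 4 * n) := by omega
    by_cases hKx : ∃ y ∈ K, G.Adj y x
    · by_cases hKx' : ∃ y ∈ K, G.Adj y x'
      · refine hM (K33_mk (K := K) (a1 := a1) (a2 := a2) (a3 := a3) (p := b) (q := x) (r := x')
          (by exact_mod_cast KS) s1 s2 hb sx sx' ?_ h3K k1 k2 kb kx kx' n12 nxb.symm nxb'.symm nxx
          b1.symm x1 x1' b2.symm x2 x2' ⟨a3, h3K, b3.symm⟩ hKx hKx')
        refine Cn_of_center a3 ?_
        intro z hz
        have hz' := (mK z).1 hz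
        clear hz
        induction hz' with
        | refl => exact .refl
        | tail h1 h2 ih =>
          exact ih.tail ⟨h2.1, (mK _).2 h1, (mK _).2 (h1.tail h2)⟩
      · refine hcon (sep_case (K := K) (a1 := a1) (a2 := a2) (b := b) (x := x) (x' := x') ih' hS KS
          s1 s2 hb sx sx' k1 k2 kb kx kx' n12 b1.ne' b2.ne' nxb.symm nxb'.symm nxx x1 x2 x1' x2'
          hb3' ?_)
        intro y hy z hz h
        rcases Kn y hy z hz h with h' | h' | h' | h' | h' | h'
        · tauto
        · tauto
        · tauto
        · tauto
        · exact absurd ⟨y, hy, h' ▸ h⟩ hKx'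
        · tauto
    · refine hcon (sep_case (K := K) (a1 := a1) (a2 := a2) (b := b) (x := x') (x' := x) ih' hS KS
          s1 s2 hb sx' sx k1 k2 kb kx' kx n12 b1.ne' b2.ne' nxb'.symm nxb.symm nxx.symm x1' x2' x1 x2
          hb3' ?_)
      intro y hy z hz h
      rcases Kn y hy z hz h with h' | h' | h' | h' | h' | h'
      · tauto
      · tauto
      · tauto
      · exact absurd ⟨y, hy, h' ▸ h⟩ hKx
      · tauto
      · tauto

theorem odd_bound {X : Type*} [Fintype X] (H : SimpleGraph X) :
    3 * H.oddComponents.ncard ≤ ∑ x : X, (if ∃ y, H.Adj x y then 1 else 3) := by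
  have := Fintype.ofFinite H.ConnectedComponent
  rw [← Finset.sum_fiberwise (s := Finset.univ) (g := fun x => H.connectedComponentMk x),
    Set.ncard_eq_toFinset_card', mul_comm, ← smul_eq_mul]
  refine (Finset.card_nsmul_le_sum _ _ _ ?_).trans
    (Finset.sum_le_sum_of_subset (Finset.subset_univ H.oddComponents.toFinset))
  intro C hC
  rw [Set.mem_toFinset] at hC
  change Odd C.supp.ncard at hC
  set F := Finset.univ.filter (fun x => H.connectedComponentMk x = C) with hF
  have hcard : C.supp.ncard = F.card := by
    rw [← Set.ncard_coe_finset]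
    congr 1
    ext x
    simp [hF, ConnectedComponent.mem_supp_iff]
  rw [hcard] at hC
  by_cases h3 : 3 ≤ F.card
  · refine h3.trans ?_
    rw [Finset.card_eq_sum_ones]
    refine Finset.sum_le_sum fun x _ => ?_
    split_ifs <;> omega
  · have h1 : F.card = 1 := by
      obtain ⟨k, hk⟩ := hC
      omega
    obtain ⟨x, hx⟩ := Finset.card_eq_one.1 h1
    rw [hx, Finset.sum_singleton, if_neg]
    rintro ⟨y, hy⟩
    have hxF : x ∈ F := by rw [hx]; simp
    have hyF : y ∈ F := by
      simp only [hF, Finset.mem_filter, Finset.mem_univ, true_and] at hxF ⊢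
      rw [← hxF]
      exact ConnectedComponent.sound hy.symm.reachable
    rw [hx, Finset.mem_singleton] at hyF
    exact hy.ne' hyF

def J {V : Type*} (G : SimpleGraph V) (d : ℕ) : SimpleGraph (V ⊕ Fin d) where
  Adj x y := x ≠ y ∧ ∀ a b, x = Sum.inl a → y = Sum.inl b → G.Adj a b
  symm := ⟨fun _ _ h => ⟨h.1.symm, fun a b h1 h2 => (h.2 b a h2 h1).symm⟩⟩
  loopless := ⟨fun _ h => h.1 rfl⟩

theorem card_matching {V : Type*} [Fintype V] {G : SimpleGraph V} (M : G.Subgraph)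
    (hM : M.IsMatching) : 2 * M.edgeSet.ncard = M.verts.ncard := by
  rw [← Subgraph.edgeSet_spanningCoe, Set.ncard_eq_toFinset_card']
  have h := M.spanningCoe.sum_degrees_eq_twice_card_edges
  rw [show M.spanningCoe.edgeSet.toFinset = M.spanningCoe.edgeFinset from rfl, ← h]
  have hd : ∀ v, M.spanningCoe.degree v = if v ∈ M.verts then 1 else 0 := by
    intro v
    split_ifs with hv
    · obtain ⟨w, hw, hu⟩ := hM hv
      rw [degree_eq_one_iff_existsUnique_adj]
      exact ⟨w, hw, hu⟩
    · rw [degree_eq_zero]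
      intro w hw
      exact hv (M.edge_vert hw)
  rw [Finset.sum_congr rfl (fun v _ => hd v), ← Finset.card_filter, ← Set.ncard_coe_finset]
  simp

theorem restrict {V : Type*} [Fintype V] (G : SimpleGraph V) (d : ℕ) (M0 : (J G d).Subgraph)
    (hM0 : M0.IsPerfectMatching) :
    ∃ M : G.Subgraph, M.IsMatching ∧ Fintype.card V ≤ 2 * M.edgeSet.ncard + d := by
  let M : G.Subgraph :=
    { verts := {v | ∃ w, M0.Adj (Sum.inl v) (Sum.inl w)}
      Adj := fun v w => M0.Adj (Sum.inl v) (Sum.inl w)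
      adj_sub := fun h => (M0.adj_sub h).2 _ _ rfl rfl
      edge_vert := fun h => ⟨_, h⟩
      symm := ⟨fun _ _ h => h.symm⟩ }
  have hM : M.IsMatching := by
    rintro v ⟨w, hw⟩
    refine ⟨w, hw, fun y hy => ?_⟩
    exact Sum.inl_injective (hM0.1.eq_of_adj_left hy hw)
  refine ⟨M, hM, ?_⟩
  rw [card_matching M hM]
  have hc : (M.vertsᶜ).ncard ≤ d := by
    have hex : ∀ v : V, v ∈ M.vertsᶜ → ∃ i : Fin d, M0.Adj (Sum.inl v) (Sum.inr i) := by
      intro v hv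
      obtain ⟨w, hw, _⟩ := hM0.1 (hM0.2 (Sum.inl v))
      rcases w with w | i
      · exact absurd ⟨w, hw⟩ hv
      · exact ⟨i, hw⟩
    choose f hf using hex
    have hinj : Function.Injective (fun v : (M.vertsᶜ : Set V) => f v.1 v.2) := by
      intro v w hvw
      have h1 := hf v.1 v.2
      have h2 := hf w.1 w.2
      simp only at hvw
      rw [hvw] at h1
      exact Subtype.ext (Sum.inl_injective (hM0.1.eq_of_adj_right h1 h2))
    have := Nat.card_le_card_of_injective _ hinj
    rwa [Nat.card_coe_set_eq, Nat.card_eq_fintype_card, Fintype.card_fin] at this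
  have := Set.ncard_add_ncard_compl M.verts
  rw [Nat.card_eq_fintype_card] at this
  omega

theorem tutte_berge {V : Type*} [Fintype V] (G : SimpleGraph V) :
    ∃ M : G.Subgraph, M.IsMatching ∧ ∃ A : Finset V,
      3 * Fintype.card V + 3 * A.card ≤ 6 * M.edgeSet.ncard + 3 +
        ∑ v ∈ Aᶜ, (if ∃ w, w ∉ A ∧ G.Adj v w then 1 else 3) := by
  obtain ⟨M, hM, hmax⟩ := Set.exists_max_image {M : G.Subgraph | M.IsMatching}
    (fun M => M.edgeSet.ncard) (Set.toFinite _) ⟨⊥, by intro v hv; simp at hv⟩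
  refine ⟨M, hM, ?_⟩
  have hle : 2 * M.edgeSet.ncard ≤ Fintype.card V := by
    rw [card_matching M hM, ← Nat.card_eq_fintype_card]
    exact Set.ncard_le_card _
  by_cases hd : Fintype.card V ≤ 2 * M.edgeSet.ncard + 1
  · exact ⟨∅, by simp only [Finset.card_empty]; omega⟩
  set d := Fintype.card V - 2 * M.edgeSet.ncard - 2 with hdd
  have hno : ∀ M0 : (J G d).Subgraph, ¬ M0.IsPerfectMatching := by
    intro M0 hM0
    obtain ⟨M', hM', h⟩ := restrict G d M0 hM0
    have := hmax M' hM'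
    omega
  have hT : ¬ ∀ u, ¬ (J G d).IsTutteViolator u := by
    rw [← SimpleGraph.tutte]
    rintro ⟨M0, h⟩
    exact hno M0 h
  push Not at hT
  obtain ⟨U, hU⟩ := hT
  unfold IsTutteViolator at hU
  set H := ((⊤ : (J G d).Subgraph).deleteVerts U).coe with hH
  have hHadj : ∀ x y, H.Adj x y ↔ (J G d).Adj x.1 y.1 := by
    intro x y
    have hx := x.2
    have hy := y.2
    simp only [Subgraph.deleteVerts_verts, Subgraph.verts_top, Set.mem_sdiff, Set.mem_univ, true_and] at hx hy
    simp [hH, hx, hy]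
  have hall : ∀ i : Fin d, Sum.inr i ∈ U := by
    intro i
    by_contra hi
    have hpre : H.Preconnected := by
      let z : ((⊤ : (J G d).Subgraph).deleteVerts U).verts := ⟨Sum.inr i, by simpa using hi⟩
      have hz : ∀ x, H.Reachable x z := by
        intro x
        by_cases hxz : x = z
        · rw [hxz]
        · apply Adj.reachable
          rw [hHadj]
          refine ⟨fun h => hxz (Subtype.ext h), ?_⟩
          intro a b _ h
          simp [z] at h
      intro x y
      exact (hz x).trans (hz y).symm
    have hsub := hpre.subsingleton_connectedComponent
    have h1 : H.oddComponents.ncard ≤ 1 := Set.ncard_le_one_of_subsingleton _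
    have h2 : H.oddComponents.ncard = 1 := by omega
    have hU0 : U = ∅ := by
      rw [← Set.ncard_eq_zero]
      omega
    have h3 := (odd_ncard_oddComponents H).1 (by rw [h2]; exact odd_one)
    have h4 : Nat.card ((⊤ : (J G d).Subgraph).deleteVerts U).verts = Fintype.card V + d := by
      rw [Nat.card_coe_set_eq, hU0]
      simp [Set.ncard_univ]
    rw [h4] at h3
    obtain ⟨k, hk⟩ := h3
    omega
  set A : Finset V := Finset.univ.filter (fun v => Sum.inl v ∈ U) with hA
  have mA : ∀ v, v ∈ A ↔ Sum.inl v ∈ U := by intro v; simp [hA]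
  refine ⟨A, ?_⟩
  have hUc : A.card + d ≤ U.ncard := by
    have : ((A.disjSum (Finset.univ : Finset (Fin d)) : Finset (V ⊕ Fin d)) : Set (V ⊕ Fin d)) ⊆ U := by
      intro x hx
      rw [Finset.mem_coe, Finset.mem_disjSum] at hx
      rcases hx with ⟨a, ha, rfl⟩ | ⟨i, _, rfl⟩
      · exact (mA a).1 ha
      · exact hall i
    have h := Set.ncard_le_ncard this (Set.toFinite _)
    rw [Set.ncard_coe_finset, Finset.card_disjSum] at h
    simpa using h
  have hfin := Fintype.ofFinite ((⊤ : (J G d).Subgraph).deleteVerts U).verts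
  have hob : 3 * H.oddComponents.ncard ≤ ∑ x, (if ∃ y, H.Adj x y then 1 else 3) := by
    convert odd_bound H
  have hinl : ∀ x : ((⊤ : (J G d).Subgraph).deleteVerts U).verts, ∃ v, v ∉ A ∧ x.1 = Sum.inl v := by
    rintro ⟨x, hx⟩
    simp only [Subgraph.deleteVerts_verts, Subgraph.verts_top, Set.mem_sdiff, Set.mem_univ, true_and] at hx
    rcases x with v | i
    · exact ⟨v, by rwa [mA], rfl⟩
    · exact absurd (hall i) hx
  choose φ hφA hφ using hinl
  have hφi : Function.Injective φ := by
    intro x y h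
    apply Subtype.ext
    rw [hφ, hφ, h]
  have hsum : ∑ x, (if ∃ y, H.Adj x y then 1 else 3) ≤
      ∑ v ∈ Aᶜ, (if ∃ w, w ∉ A ∧ G.Adj v w then 1 else 3) := by
    calc _ ≤ ∑ x, (if ∃ w, w ∉ A ∧ G.Adj (φ x) w then 1 else 3) := by
          refine Finset.sum_le_sum fun x _ => ?_
          by_cases h : ∃ w, w ∉ A ∧ G.Adj (φ x) w
          · rw [if_pos, if_pos h]
            obtain ⟨w, hw, hxw⟩ := h
            refine ⟨⟨Sum.inl w, ?_⟩, ?_⟩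
            · simpa [mA] using hw
            · rw [hHadj, hφ x]
              refine ⟨fun h => hxw.ne (Sum.inl_injective h), ?_⟩
              intro a b ha hb
              rw [← Sum.inl_injective ha, ← Sum.inl_injective hb]
              exact hxw
          · rw [if_neg h]; split_ifs <;> omega
      _ = ∑ v ∈ Finset.univ.image φ, (if ∃ w, w ∉ A ∧ G.Adj v w then 1 else 3) := by
          rw [Finset.sum_image (fun x _ y _ h => hφi h)]
      _ ≤ _ := by
          apply Finset.sum_le_sum_of_subset
          intro v hv
          rw [Finset.mem_image] at hv
          obtain ⟨x, _, rfl⟩ := hv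
          simpa using hφA x
  omega

theorem main {V : Type*} [Fintype V] (G : SimpleGraph V) (hG : G.IsPlanar) :
    ∃ M : G.Subgraph, M.IsMatching ∧
      e2 G Finset.univ ≤ 4 * Fintype.card V + 6 * M.edgeSet.ncard := by
  obtain ⟨M, hM, A, hA⟩ := tutte_berge G
  refine ⟨M, hM, ?_⟩
  by_cases hn : Fintype.card V ≤ 5
  · have := e2_le G Finset.univ
    rw [Finset.card_univ] at this
    have h2 : Fintype.card V * (Fintype.card V - 1) ≤ Fintype.card V * 4 :=
      Nat.mul_le_mul_left _ (by omega)
    omega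
  set B : Finset V := Aᶜ.filter (fun v => ¬ ∃ w, w ∉ A ∧ G.Adj v w) with hB
  have hBA : ∀ v, v ∈ B ↔ v ∉ A ∧ ∀ w, G.Adj v w → w ∈ A := by
    intro v
    simp only [hB, Finset.mem_filter, Finset.mem_compl]
    refine and_congr_right fun _ => ?_
    push Not
    exact forall_congr' fun w => by tauto
  have hW : ∑ v ∈ Aᶜ, (if ∃ w, w ∉ A ∧ G.Adj v w then 1 else 3) = Aᶜ.card + 2 * B.card := by
    have : ∀ v, (if ∃ w, w ∉ A ∧ G.Adj v w then 1 else 3) =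
        1 + 2 * (if ¬ ∃ w, w ∉ A ∧ G.Adj v w then 1 else 0) := by
      intro v; by_cases h : ∃ w, w ∉ A ∧ G.Adj v w
      · rw [if_pos h, if_neg (not_not.2 h)]
      · rw [if_neg h, if_pos h]
    rw [Finset.sum_congr rfl (fun v _ => this v), Finset.sum_add_distrib, ← Finset.mul_sum,
      ← Finset.card_filter, ← Finset.card_eq_sum_ones]
  have hcA := Finset.card_add_card_compl A
  have hcB := Finset.card_add_card_compl B
  have hdis : Disjoint A B := by
    rw [Finset.disjoint_right]
    intro v hv
    exact ((hBA v).1 hv).1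
  have hAB : (A ∪ B).card = A.card + B.card := Finset.card_union_of_disjoint hdis
  -- bipartite graph
  let c : V → Bool := fun v => decide (v ∈ A)
  let Gb : SimpleGraph V :=
    { Adj := fun x y => G.Adj x y ∧ c x ≠ c y
      symm := ⟨fun _ _ h => ⟨h.1.symm, h.2.symm⟩⟩
      loopless := ⟨fun _ h => h.2 rfl⟩ }
  have hsplit : e2 G Finset.univ ≤ e2 G Bᶜ + e2 Gb (A ∪ B) := by
    rw [e2_eq, e2_eq, e2_eq]
    refine le_trans (Finset.card_le_card ?_) (Finset.card_union_le _ _)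
    rintro ⟨x, y⟩ hp
    simp only [Finset.mem_filter, Finset.mem_product, Finset.mem_univ, true_and, Finset.mem_union,
      Finset.mem_compl] at hp ⊢
    by_cases hx : x ∈ B
    · have h1 := (hBA x).1 hx
      have h2 := h1.2 y hp
      exact Or.inr ⟨⟨Or.inr hx, Or.inl h2⟩, hp, by simp [c, h1.1, h2]⟩
    · by_cases hy : y ∈ B
      · have h1 := (hBA y).1 hy
        have h2 := h1.2 x hp.symm
        exact Or.inr ⟨⟨Or.inl h2, Or.inr hy⟩, hp, by simp [c, h1.1, h2]⟩
      · exact Or.inl ⟨⟨hx, hy⟩, hp⟩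
  have h5 : 3 ≤ (Bᶜ).card → e2 G Bᶜ + 12 ≤ 6 * (Bᶜ).card := fun h =>
    e2_K5 _ _ G rfl h (fun h => hG.1 h.hasMinor)
  have h33 : 3 ≤ (A ∪ B).card → e2 Gb (A ∪ B) + 8 ≤ 4 * (A ∪ B).card := fun h =>
    e2_K33 c _ _ Gb (fun _ _ h => h.2) rfl h
      (fun h => hG.2 (h.mono (S' := A ∪ B) (G' := G) (fun _ _ h => h.1) subset_rfl).hasMinor)
  have h5' : (Bᶜ).card ≤ 2 → e2 G Bᶜ ≤ 6 * (Bᶜ).card := fun h => by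
    have := e2_le G Bᶜ
    have h2 : (Bᶜ).card * ((Bᶜ).card - 1) ≤ (Bᶜ).card * 6 := Nat.mul_le_mul_left _ (by omega)
    omega
  have h33' : (A ∪ B).card ≤ 2 → e2 Gb (A ∪ B) ≤ 4 * (A ∪ B).card := fun h => by
    have := e2_le Gb (A ∪ B)
    have h2 : (A ∪ B).card * ((A ∪ B).card - 1) ≤ (A ∪ B).card * 4 :=
      Nat.mul_le_mul_left _ (by omega)
    omega
  rw [hW] at hA
  omega

end PM

/-- Every planar graph with `n` vertices and `m` edges contains a matching of
size at least `(m − 2n)/3`. -/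
theorem stmt_1 {V : Type*} [Fintype V] [DecidableEq V]
    (G : SimpleGraph V) [DecidableRel G.Adj] (hG : G.IsPlanar) :
    ∃ M : G.Subgraph, M.IsMatching ∧
      ((G.edgeFinset.card : ℝ) - 2 * (Fintype.card V : ℝ)) / 3 ≤
        (M.edgeSet.ncard : ℝ) := by
  obtain ⟨M, hM, h⟩ := PM.main G hG
  refine ⟨M, hM, ?_⟩
  have h2 : PM.e2 G Finset.univ = 2 * G.edgeFinset.card := by
    rw [← G.sum_degrees_eq_twice_card_edges]
    refine Finset.sum_congr rfl fun v _ => ?_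
    rw [← G.card_neighborFinset_eq_degree]
    congr 1
    ext w
    simp [PM.mem_nb]
  rw [h2] at h
  have h3 : (G.edgeFinset.card : ℝ) ≤ 2 * (Fintype.card V : ℝ) + 3 * (M.edgeSet.ncard : ℝ) := by
    have : G.edgeFinset.card ≤ 2 * Fintype.card V + 3 * M.edgeSet.ncard := by omega
    exact_mod_cast this
  linarith
end

section
/- Every maximal outerplanar graph with at least 2 vertices can be edge-partitioned into three star forests F_1, F_2, F_3 such that every vertex is the center of a star in at most one of the forests. -/
open SimpleGraph

/-- A graph is outerplanar iff it has neither `K₄` nor `K₂,₃` as a minor. -/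
def SimpleGraph.IsOuterplanar {V : Type*} (G : SimpleGraph V) : Prop :=
  ¬ G.HasMinor (completeGraph (Fin 4)) ∧
  ¬ G.HasMinor (completeBipartiteGraph (Fin 2) (Fin 3))

/-- A maximal outerplanar graph: outerplanar, and adding any missing edge
destroys outerplanarity. -/
def SimpleGraph.IsMaximalOuterplanar {V : Type*} (G : SimpleGraph V) : Prop :=
  G.IsOuterplanar ∧
  ∀ u v : V, u ≠ v → ¬ G.Adj u v →
    ¬ (G ⊔ SimpleGraph.fromEdgeSet {s(u, v)}).IsOuterplanar

/-- `F` is a star forest with center set `C`. -/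
def IsStarForestWithCenters {V : Type*} (F : Set (Sym2 V)) (C : Set V) : Prop :=
  (∀ e ∈ F, ∃ u v, e = s(u, v) ∧ u ∈ C ∧ v ∉ C) ∧
  (∀ v ∉ C, {e | e ∈ F ∧ v ∈ e}.Subsingleton)

theorem union_conn_of_adj {V : Type*} (G : SimpleGraph V) {A P : Set V} {a p : V}
    (hA : (G.induce A).Connected) (hP : (G.induce P).Connected) (ha : a ∈ A) (hp : p ∈ P)
    (h : G.Adj a p) : (G.induce (A ∪ P)).Connected := by
  have e : A ∪ P = (A ∪ {a, p}) ∪ P := by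
    ext x
    simp only [Set.mem_union, Set.mem_insert_iff, Set.mem_singleton_iff]
    constructor
    · tauto
    · rintro ((h | rfl | rfl) | h) <;> tauto
  rw [e]
  exact SimpleGraph.induce_union_connected
    (SimpleGraph.induce_union_connected hA.preconnected
      (SimpleGraph.induce_pair_connected_of_adj h).preconnected ⟨a, ha, by simp⟩).preconnected
    hP.preconnected ⟨p, by simp, hp⟩

open Classical in
theorem exists_start {V : Type*} (G : SimpleGraph V) (B : Finset V) (hB : B.Nonempty)
    (hd3 : ∀ b ∈ B, 3 ≤ (B.filter (G.Adj b)).card) :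
    ∃ (b b' : V) (B' : Finset V), B'.card < B.card ∧ Disjoint ({b} : Set V) {b'} ∧
      (∀ c ∈ B', c ∉ ({b} : Set V) ∧ c ∉ ({b'} : Set V)) ∧
      (∃ a ∈ ({b} : Set V), ∃ p ∈ ({b'} : Set V), G.Adj a p) ∧ B'.Nonempty ∧
      (∀ c ∈ B', 3 ≤ (B'.filter (G.Adj c)).card +
        (if ∃ a ∈ ({b} : Set V), G.Adj c a then 1 else 0)
        + (if ∃ p ∈ ({b'} : Set V), G.Adj c p then 1 else 0)) := by
  obtain ⟨b, hb⟩ := hB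
  have h3 := hd3 b hb
  have : ∃ b', b' ∈ B.filter (G.Adj b) := Finset.card_pos.1 (by omega)
  obtain ⟨b', hb'⟩ := this
  rw [Finset.mem_filter] at hb'
  have hne : b ≠ b' := hb'.2.ne
  refine ⟨b, b', (B.erase b).erase b', ?_, ?_, ?_, ?_, ?_, ?_⟩
  · have := Finset.card_erase_lt_of_mem hb
    have := Finset.card_le_card (Finset.erase_subset b' (B.erase b))
    omega
  · simpa using hne
  · intro c; simp; tauto
  · exact ⟨b, rfl, b', rfl, hb'.2⟩
  · obtain ⟨c, hc, hcb⟩ := Finset.exists_mem_ne (s := B.filter (G.Adj b)) (by omega) b'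
    rw [Finset.mem_filter] at hc
    exact ⟨c, by simp [hcb, hc.2.ne', hc.1]⟩
  · intro c hc
    have hcB : c ∈ B := by simp at hc; tauto
    have h := hd3 c hcB
    have hsub : B.filter (G.Adj c) ⊆ (((B.erase b).erase b').filter (G.Adj c)) ∪
        ((if G.Adj c b then {b} else ∅) ∪ (if G.Adj c b' then {b'} else ∅)) := by
      intro d hd
      rw [Finset.mem_filter] at hd
      by_cases h1 : d = b
      · subst h1; simp [hd.2]
      · by_cases h2 : d = b'
        · subst h2; simp [hd.2]
        · simp [h1, h2, hd]
    have hc1 := Finset.card_le_card hsub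
    have hc2 := Finset.card_union_le (((B.erase b).erase b').filter (G.Adj c))
        ((if G.Adj c b then {b} else ∅) ∪ (if G.Adj c b' then {b'} else ∅))
    have hc3 := Finset.card_union_le (if G.Adj c b then ({b} : Finset V) else ∅)
      (if G.Adj c b' then {b'} else ∅)
    simp only [Set.mem_singleton_iff, exists_eq_left]
    have e1 : (if G.Adj c b then ({b} : Finset V) else ∅).card = if G.Adj c b then 1 else 0 := by
      split_ifs <;> simp
    have e2 : (if G.Adj c b' then ({b'} : Finset V) else ∅).card = if G.Adj c b' then 1 else 0 := by
      split_ifs <;> simp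
    omega

open Classical in
theorem k4_of_state {V : Type*} (G : SimpleGraph V) :
    ∀ (n : ℕ) (A P : Set V) (B : Finset V), B.card ≤ n →
      A.Nonempty → P.Nonempty →
      (G.induce A).Connected → (G.induce P).Connected → Disjoint A P →
      (∀ b ∈ B, b ∉ A ∧ b ∉ P) →
      (∃ a ∈ A, ∃ p ∈ P, G.Adj a p) → B.Nonempty →
      (∀ b ∈ B, 3 ≤ (B.filter (G.Adj b)).card + (if ∃ a ∈ A, G.Adj b a then 1 else 0)
        + (if ∃ p ∈ P, G.Adj b p then 1 else 0)) →
      G.HasMinor (completeGraph (Fin 4)) := by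
  intro n
  induction n with
  | zero =>
    intro A P B h _ _ _ _ _ _ _ hB
    have := hB.card_pos
    omega
  | succ n ih =>
    intro A P B hn hAn hPn hA hP hAP hdis hadj hB hdeg
    have hsing : ∀ v : V, (G.induce ({v} : Set V)).Connected := by
      intro v
      exact (SimpleGraph.connected_iff _).2 ⟨SimpleGraph.Preconnected.of_subsingleton, ⟨v, rfl⟩⟩
    by_cases hx : ∃ x ∈ B, ∃ y, (y ∈ A ∨ y ∈ P) ∧ G.Adj x y
    swap
    · push Not at hx
      have hd3 : ∀ b ∈ B, 3 ≤ (B.filter (G.Adj b)).card := by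
        intro b hb
        have h1 := hdeg b hb
        rw [if_neg, if_neg] at h1
        · omega
        · rintro ⟨p, hp, h⟩; exact hx b hb p (Or.inr hp) h
        · rintro ⟨p, hp, h⟩; exact hx b hb p (Or.inl hp) h
      obtain ⟨b, b', B', g1, g2⟩ := exists_start G B hB hd3
      obtain ⟨g2, g3, g4, g5, g6⟩ := g2
      exact ih {b} {b'} B' (by omega) ⟨b, rfl⟩ ⟨b', rfl⟩ (hsing _) (hsing _) g2 g3 g4 g5 g6
    · have herase : ∀ x c, (B.filter (G.Adj c)).card ≤
          ((B.erase x).filter (G.Adj c)).card + (if G.Adj c x then 1 else 0) := by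
        intro x c
        have hsub : B.filter (G.Adj c) ⊆ ((B.erase x).filter (G.Adj c)) ∪
            (if G.Adj c x then {x} else ∅) := by
          intro d hd
          rw [Finset.mem_filter] at hd
          by_cases h1 : d = x
          · subst h1; simp [hd.2]
          · simp [h1, hd]
        have hc1 := Finset.card_le_card hsub
        have hc2 := Finset.card_union_le ((B.erase x).filter (G.Adj c))
          (if G.Adj c x then {x} else ∅)
        have e1 : (if G.Adj c x then ({x} : Finset V) else ∅).card = if G.Adj c x then 1 else 0 := by
          split_ifs <;> simp
        omega
      have hpos : ∀ x ∈ B, ∃ y ∈ B, G.Adj x y := by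
        intro x hx
        have h := hdeg x hx
        have : 0 < (B.filter (G.Adj x)).card := by split_ifs at h <;> omega
        obtain ⟨y, hy⟩ := Finset.card_pos.1 this
        rw [Finset.mem_filter] at hy
        exact ⟨y, hy⟩
      have hcard : ∀ x ∈ B, (B.erase x).card ≤ n := by
        intro x hx
        have := Finset.card_erase_lt_of_mem hx
        omega
      by_cases hbad : ∃ b ∈ B, (∃ a ∈ A, G.Adj b a) ∧ (∃ p ∈ P, G.Adj b p) ∧
          (B.filter (G.Adj b)).card ≤ 1
      swap
      · obtain ⟨x, hxB, y, hy, hxy⟩ := hx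
        push Not at hbad
        obtain ⟨a, ha, p, hp, hap⟩ := hadj
        refine ih (A ∪ P) {x} (B.erase x) (hcard x hxB) (hAn.mono (by simp)) ⟨x, rfl⟩
          (union_conn_of_adj G hA hP ha hp hap) (hsing x) ?_ ?_ ?_ ?_ ?_
        · simpa using hdis x hxB
        · intro b hb
          have := hdis b (Finset.mem_of_mem_erase hb)
          have := Finset.ne_of_mem_erase hb
          simp; tauto
        · exact ⟨y, hy, x, rfl, hxy.symm⟩
        · obtain ⟨z, hz, hxz⟩ := hpos x hxB
          exact ⟨z, by simp [hz, hxz.ne']⟩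
        · intro b hb
          have hbB := Finset.mem_of_mem_erase hb
          have h := hdeg b hbB
          have h1 := herase x b
          have h2 := hbad b hbB
          simp only [Set.mem_singleton_iff, exists_eq_left]
          by_cases c1 : ∃ a ∈ A, G.Adj b a
          · have c3 : ∃ a ∈ A ∪ P, G.Adj b a := by
              obtain ⟨a, ha, h⟩ := c1; exact ⟨a, Or.inl ha, h⟩
            rw [if_pos c3]
            rw [if_pos c1] at h
            by_cases c2 : ∃ p ∈ P, G.Adj b p
            · obtain ⟨a', ha', c1⟩ := c1
              obtain ⟨p', hp', c2'⟩ := c2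
              have := h2 ⟨a', ha', c1⟩ ⟨p', hp', c2'⟩
              omega
            · rw [if_neg c2] at h
              omega
          · rw [if_neg c1] at h
            by_cases c2 : ∃ p ∈ P, G.Adj b p
            · have c3 : ∃ a ∈ A ∪ P, G.Adj b a := by
                obtain ⟨a, ha, h⟩ := c2; exact ⟨a, Or.inr ha, h⟩
              rw [if_pos c3]
              rw [if_pos c2] at h
              omega
            · rw [if_neg c2] at h
              omega
      · obtain ⟨b, hbB, hbA, hbP, hb1⟩ := hbad
        obtain ⟨w, hwB, hbw⟩ := hpos b hbB
        have huniq : ∀ c ∈ B, G.Adj b c → c = w := by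
          intro c hc hbc
          exact Finset.card_le_one.1 hb1 c (by simp [*]) w (by simp [*])
        -- the key move
        have key : ∀ (A P : Set V), A.Nonempty → P.Nonempty →
            (G.induce A).Connected → (G.induce P).Connected → Disjoint A P →
            (∀ b ∈ B, b ∉ A ∧ b ∉ P) →
            (∃ a ∈ A, ∃ p ∈ P, G.Adj a p) →
            (∀ b ∈ B, 3 ≤ (B.filter (G.Adj b)).card + (if ∃ a ∈ A, G.Adj b a then 1 else 0)
              + (if ∃ p ∈ P, G.Adj b p then 1 else 0)) →
            (∃ p ∈ P, G.Adj b p) → (¬ ∃ p ∈ P, G.Adj w p) →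
            G.HasMinor (completeGraph (Fin 4)) := by
          intro A P hAn hPn hA hP hAP hdis hadj hdeg hbP hwP
          obtain ⟨p, hp, hbp⟩ := hbP
          refine ih A (P ∪ {b}) (B.erase b) (hcard b hbB) hAn (hPn.mono (by simp)) hA
            (union_conn_of_adj G hP (hsing b) hp rfl hbp.symm) ?_ ?_ ?_ ?_ ?_
          · rw [Set.disjoint_union_right]
            exact ⟨hAP, by simpa using (hdis b hbB).1⟩
          · intro c hc
            have := hdis c (Finset.mem_of_mem_erase hc)
            have := Finset.ne_of_mem_erase hc
            simp; tauto
          · obtain ⟨a, ha, p, hp, h⟩ := hadj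
            exact ⟨a, ha, p, Or.inl hp, h⟩
          · exact ⟨w, by simp [hwB, hbw.ne']⟩
          · intro c hc
            have hcB := Finset.mem_of_mem_erase hc
            have h := hdeg c hcB
            have h1 := herase b c
            by_cases hcw : c = w
            · subst hcw
              rw [if_neg hwP] at h
              have : ∃ p ∈ P ∪ {b}, G.Adj c p := ⟨b, Or.inr rfl, hbw.symm⟩
              rw [if_pos this]
              rw [if_pos hbw.symm] at h1
              omega
            · have hcb : ¬ G.Adj c b := fun h => hcw (huniq c hcB h.symm)
              rw [if_neg hcb] at h1
              have : (if ∃ p ∈ P, G.Adj c p then 1 else 0) ≤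
                  (if ∃ p ∈ P ∪ {b}, G.Adj c p then 1 else 0) := by
                by_cases c2 : ∃ p ∈ P, G.Adj c p
                · have c3 : ∃ a ∈ P ∪ {b}, G.Adj c a := by
                    obtain ⟨a, ha, h⟩ := c2; exact ⟨a, Or.inl ha, h⟩
                  rw [if_pos c3, if_pos c2]
                · rw [if_neg c2]; exact Nat.zero_le _
              omega
        by_cases hwP : ∃ p ∈ P, G.Adj w p
        swap
        · exact key A P hAn hPn hA hP hAP hdis hadj hdeg hbP hwP
        by_cases hwA : ∃ p ∈ A, G.Adj w p
        swap
        · refine key P A hPn hAn hP hA hAP.symm (fun b hb => (hdis b hb).symm) ?_ ?_ hbA hwA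
          · obtain ⟨a, ha, p, hp, h⟩ := hadj
            exact ⟨p, hp, a, ha, h.symm⟩
          · intro b hb
            have := hdeg b hb
            omega
        have hbd := hdis b hbB
        have hwd := hdis w hwB
        have hbw' := hbw.ne
        have hsymm : ∀ X Y : Set V, (∃ x ∈ X, ∃ y ∈ Y, G.Adj x y) → ∃ y ∈ Y, ∃ x ∈ X, G.Adj y x := by
          rintro X Y ⟨x, hx, y, hy, h⟩; exact ⟨y, hy, x, hx, h.symm⟩
        have q1 : ∃ x ∈ ({b} : Set V), ∃ y ∈ A, G.Adj x y := ⟨b, rfl, hbA⟩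
        have q2 : ∃ x ∈ ({b} : Set V), ∃ y ∈ P, G.Adj x y := ⟨b, rfl, hbP⟩
        have q3 : ∃ x ∈ ({w} : Set V), ∃ y ∈ A, G.Adj x y := ⟨w, rfl, hwA⟩
        have q4 : ∃ x ∈ ({w} : Set V), ∃ y ∈ P, G.Adj x y := ⟨w, rfl, hwP⟩
        have q5 : ∃ x ∈ ({b} : Set V), ∃ y ∈ ({w} : Set V), G.Adj x y := ⟨b, rfl, w, rfl, hbw⟩
        have q1' := hsymm _ _ q1
        have q2' := hsymm _ _ q2
        have q3' := hsymm _ _ q3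
        have q4' := hsymm _ _ q4
        have q5' := hsymm _ _ q5
        have hadj' := hsymm _ _ hadj
        have r1 : Disjoint A {b} := by simpa using hbd.1
        have r2 : Disjoint P {b} := by simpa using hbd.2
        have r3 : Disjoint A {w} := by simpa using hwd.1
        have r4 : Disjoint P {w} := by simpa using hwd.2
        have r5 : Disjoint ({b} : Set V) {w} := by simpa using hbw'
        refine ⟨![A, P, {b}, {w}], ?_, ?_, ?_, ?_⟩
        · intro i
          fin_cases i
          exacts [hAn, hPn, ⟨b, rfl⟩, ⟨w, rfl⟩]
        · intro i
          fin_cases i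
          exacts [hA, hP, hsing b, hsing w]
        · intro i j hij
          fin_cases i <;> fin_cases j <;> first
            | exact absurd rfl hij
            | assumption
            | (apply Disjoint.symm; assumption)
        · intro i j hij
          have hij : i ≠ j := hij
          fin_cases i <;> fin_cases j <;> first
            | exact absurd rfl hij
            | assumption

open Classical in
theorem exists_low_degree {V : Type*} (G : SimpleGraph V)
    (hG : ¬ G.HasMinor (completeGraph (Fin 4))) (S : Finset V) (hS : S.Nonempty) :
    ∃ v ∈ S, (S.filter (G.Adj v)).card ≤ 2 := by
  by_contra hcon
  push Not at hcon
  apply hG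
  obtain ⟨b, b', B', g1, g2, g3, g4, g5, g6⟩ := exists_start G S hS (fun b hb => hcon b hb)
  have hsing : ∀ v : V, (G.induce ({v} : Set V)).Connected := by
    intro v
    exact (SimpleGraph.connected_iff _).2 ⟨SimpleGraph.Preconnected.of_subsingleton, ⟨v, rfl⟩⟩
  exact k4_of_state G _ {b} {b'} B' le_rfl ⟨b, rfl⟩ ⟨b', rfl⟩ (hsing _) (hsing _) g2 g3 g4 g5 g6

/-- Colouring with an orientation. -/
def GoodCol {V : Type*} (G : SimpleGraph V) : Prop :=
  ∃ (c : V → Fin 3) (D : V → V → Prop),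
    (∀ x y, G.Adj x y → c x ≠ c y) ∧
    (∀ x y, G.Adj x y → D x y ∨ D y x) ∧
    (∀ x y, D x y → ¬ D y x) ∧
    (∀ x y, D x y → G.Adj x y) ∧
    (∀ x y z, D x z → D y z → x ≠ y → c x ≠ c y)

/-- Delete `v` and join its neighbours. -/
def elimV {V : Type*} (G : SimpleGraph V) (v : V) : SimpleGraph V where
  Adj a b := a ≠ v ∧ b ≠ v ∧ a ≠ b ∧ (G.Adj a b ∨ (G.Adj a v ∧ G.Adj b v))
  symm := ⟨fun a b h => ⟨h.2.1, h.1, h.2.2.1.symm, h.2.2.2.imp (fun h => h.symm) (fun h => h.symm)⟩⟩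
  loopless := ⟨fun a h => h.2.2.1 rfl⟩

theorem elimV_minor {V : Type*} (G : SimpleGraph V) (v u : V)
    (hu : ∀ a b, G.Adj a v → G.Adj b v → a ≠ b → a = u ∨ b = u)
    (h : (elimV G v).HasMinor (completeGraph (Fin 4))) :
    G.HasMinor (completeGraph (Fin 4)) := by
  obtain ⟨f, hne, hconn, hdis, hadj⟩ := h
  have hv : ∀ i, v ∉ f i := by
    intro i hi
    obtain ⟨j, hij⟩ : ∃ j : Fin 4, i ≠ j := ⟨i + 1, by fin_cases i <;> decide⟩
    obtain ⟨a, ha, b, hb, hab⟩ := hadj i j hij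
    have hav : a ≠ v := hab.1
    have hr := (hconn i).preconnected ⟨v, hi⟩ ⟨a, ha⟩
    obtain ⟨p⟩ := hr
    cases p with
    | nil => exact hav rfl
    | cons h p => exact h.1 rfl
  refine ⟨fun i => f i ∪ {x | x = v ∧ u ∈ f i ∧ G.Adj u v}, ?_, ?_, ?_, ?_⟩
  · intro i; exact (hne i).mono (by simp)
  · intro i
    set T := f i ∪ {x | x = v ∧ u ∈ f i ∧ G.Adj u v} with hT
    have step : ∀ (a b : f i), ((elimV G v).induce (f i)).Adj a b →
        (G.induce T).Reachable ⟨a, Or.inl a.2⟩ ⟨b, Or.inl b.2⟩ := by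
      rintro ⟨a, ha⟩ ⟨b, hb⟩ ⟨h1, h2, h3, h4⟩
      rcases h4 with h4 | ⟨h4, h5⟩
      · exact SimpleGraph.Adj.reachable (by exact h4)
      · have huf : u ∈ f i ∧ G.Adj u v := by
          rcases hu a b h4 h5 h3 with h | h
          · subst h; exact ⟨ha, h4⟩
          · subst h; exact ⟨hb, h5⟩
        have hvT : v ∈ T := Or.inr ⟨rfl, huf⟩
        have e1 : (G.induce T).Adj ⟨a, Or.inl ha⟩ ⟨v, hvT⟩ := h4
        have e2 : (G.induce T).Adj ⟨v, hvT⟩ ⟨b, Or.inl hb⟩ := h5.symm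
        exact e1.reachable.trans e2.reachable
    have walk : ∀ (a b : f i), ((elimV G v).induce (f i)).Walk a b →
        (G.induce T).Reachable ⟨a, Or.inl a.2⟩ ⟨b, Or.inl b.2⟩ := by
      intro a b p
      induction p with
      | nil => exact SimpleGraph.Reachable.refl _
      | cons h p ih => exact (step _ _ h).trans ih
    have base : ∀ x : T, ∃ a : f i, (G.induce T).Reachable x ⟨a, Or.inl a.2⟩ := by
      rintro ⟨x, hx | ⟨rfl, hx1, hx2⟩⟩
      · exact ⟨⟨x, hx⟩, SimpleGraph.Reachable.refl _⟩
      · exact ⟨⟨u, hx1⟩, SimpleGraph.Adj.reachable (by exact hx2.symm)⟩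
    obtain ⟨a0, ha0⟩ := hne i
    refine (SimpleGraph.connected_iff _).2 ⟨?_, ⟨a0, Or.inl ha0⟩⟩
    intro x y
    obtain ⟨a, hxa⟩ := base x
    obtain ⟨b, hyb⟩ := base y
    obtain ⟨p⟩ := (hconn i).preconnected a b
    exact hxa.trans ((walk a b p).trans hyb.symm)
  · intro i j hij
    have hd := Set.disjoint_left.1 (hdis hij)
    rw [Set.disjoint_left]
    rintro x (hx | ⟨rfl, hx, _⟩) (hy | ⟨hy, hy2, _⟩)
    · exact hd hx hy
    · subst hy; exact hv i hx
    · exact hv j hy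
    · exact hd hx hy2
  · intro i j hij
    obtain ⟨a, ha, b, hb, h1, h2, h3, h4⟩ := hadj i j hij
    rcases h4 with h4 | ⟨h4, h5⟩
    · exact ⟨a, Or.inl ha, b, Or.inl hb, h4⟩
    · rcases hu a b h4 h5 h3 with h | h
      · subst h; exact ⟨v, Or.inr ⟨rfl, ha, h4⟩, b, Or.inl hb, h5.symm⟩
      · subst h; exact ⟨a, Or.inl ha, v, Or.inr ⟨rfl, hb, h5⟩, h4⟩

open Classical in
theorem goodCol {V : Type*} : ∀ (n : ℕ) (S : Finset V) (G : SimpleGraph V), S.card ≤ n →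
    (∀ a b, G.Adj a b → a ∈ S) → ¬ G.HasMinor (completeGraph (Fin 4)) → GoodCol G := by
  intro n
  induction n with
  | zero =>
    intro S G hS hsup _
    have : S = ∅ := Finset.card_eq_zero.1 (by omega)
    subst this
    have hno : ∀ a b, ¬ G.Adj a b := fun a b h => by simpa using hsup a b h
    exact ⟨fun _ => 0, fun _ _ => False, fun x y h => absurd h (hno _ _),
      fun x y h => absurd h (hno _ _), by simp, by simp, by simp⟩
  | succ n ih =>
    intro S G hS hsup hmin
    by_cases hne : S.Nonempty
    swap
    · exact ih S G (by simp [Finset.not_nonempty_iff_eq_empty.1 hne]) hsup hmin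
    obtain ⟨v, hvS, hv2⟩ := exists_low_degree G hmin S hne
    have hu : ∃ u, ∀ a b, G.Adj a v → G.Adj b v → a ≠ b → a = u ∨ b = u := by
      by_cases hw : ∃ u, G.Adj u v
      · obtain ⟨u, huv⟩ := hw
        refine ⟨u, fun a b ha hb hab => ?_⟩
        by_contra hcon
        push Not at hcon
        have hsub : ({a, b, u} : Finset V) ⊆ S.filter (G.Adj v) := by
          intro x hx
          simp only [Finset.mem_insert, Finset.mem_singleton] at hx
          rw [Finset.mem_filter]
          rcases hx with rfl | rfl | rfl
          · exact ⟨hsup _ _ ha, ha.symm⟩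
          · exact ⟨hsup _ _ hb, hb.symm⟩
          · exact ⟨hsup _ _ huv, huv.symm⟩
        have := Finset.card_le_card hsub
        rw [Finset.card_eq_three.2 ⟨a, b, u, hab, hcon.1, hcon.2, rfl⟩] at this
        omega
      · push Not at hw
        exact ⟨v, fun a b ha => absurd ha (hw a)⟩
    obtain ⟨u, hu⟩ := hu
    have hc := Finset.card_erase_lt_of_mem hvS
    obtain ⟨c, D, h1, h2, h3, h4, h5⟩ := ih (S.erase v) (elimV G v) (by omega)
      (by
        rintro a b ⟨h1, h2, h3, h4⟩
        refine Finset.mem_erase.2 ⟨h1, ?_⟩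
        rcases h4 with h4 | h4
        · exact hsup _ _ h4
        · exact hsup _ _ h4.1) (fun h => hmin (elimV_minor G v u hu h))
    obtain ⟨k, hk⟩ : ∃ k : Fin 3, k ∉ (S.filter (G.Adj v)).image c := by
      by_contra hcon
      push Not at hcon
      have : (Finset.univ : Finset (Fin 3)) ⊆ (S.filter (G.Adj v)).image c := fun k _ => hcon k
      have h6 := Finset.card_le_card this
      have h7 := Finset.card_image_le (s := S.filter (G.Adj v)) (f := c)
      simp at h6
      omega
    have hk' : ∀ a, G.Adj a v → c a ≠ k := by
      intro a ha h
      exact hk (Finset.mem_image.2 ⟨a, by simp [hsup _ _ ha, ha.symm], h⟩)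
    refine ⟨fun x => if x = v then k else c x,
      fun x y => (y = v ∧ G.Adj x v) ∨ (x ≠ v ∧ y ≠ v ∧ D x y ∧ G.Adj x y), ?_, ?_, ?_, ?_, ?_⟩
    · intro x y hxy
      by_cases hx : x = v
      · subst hx
        simpa [hxy.ne'] using (hk' y hxy.symm).symm
      · by_cases hy : y = v
        · subst hy
          simpa [hx] using hk' x hxy
        · simpa [hx, hy] using h1 x y ⟨hx, hy, hxy.ne, Or.inl hxy⟩
    · intro x y hxy
      by_cases hx : x = v
      · subst hx
        exact Or.inr (Or.inl ⟨rfl, hxy.symm⟩)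
      · by_cases hy : y = v
        · subst hy
          exact Or.inl (Or.inl ⟨rfl, hxy⟩)
        · rcases h2 x y ⟨hx, hy, hxy.ne, Or.inl hxy⟩ with h | h
          · exact Or.inl (Or.inr ⟨hx, hy, h, hxy⟩)
          · exact Or.inr (Or.inr ⟨hy, hx, h, hxy.symm⟩)
    · rintro x y (⟨rfl, h⟩ | ⟨hx, hy, h, hxy⟩) (⟨h', h''⟩ | ⟨hx', hy', h', hxy'⟩)
      · exact h.ne h'
      · exact hx' rfl
      · exact hx h'
      · exact h3 _ _ h h'
    · rintro x y (⟨rfl, h⟩ | ⟨hx, hy, h, hxy⟩)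
      · exact h
      · exact hxy
    · rintro x y z (⟨rfl, h⟩ | ⟨hx, hy, h, hxy⟩) (⟨h', h''⟩ | ⟨hx', hy', h', hxy'⟩) hne
      · simpa [h.ne, h''.ne] using h1 x y ⟨h.ne, h''.ne, hne, Or.inr ⟨h, h''⟩⟩
      · exact absurd rfl hy'
      · exact absurd h' hy
      · simpa [hx, hx'] using h5 x y z h h' hne

/-- Every maximal outerplanar graph with at least 2 vertices can be
edge-partitioned into three star forests such that every vertex is the center
of a star in at most one of the forests. -/
theorem stmt_3 {V : Type*} [Fintype V] [DecidableEq V]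
    (G : SimpleGraph V) (hG : G.IsMaximalOuterplanar)
    (hn : 2 ≤ Fintype.card V) :
    ∃ (F : Fin 3 → Set (Sym2 V)) (C : Fin 3 → Set V),
      (∀ i, IsStarForestWithCenters (F i) (C i)) ∧
      (Pairwise fun i j => Disjoint (F i) (F j)) ∧
      (F 0 ∪ F 1 ∪ F 2 = G.edgeSet) ∧
      (∀ v : V, {i : Fin 3 | v ∈ C i}.Subsingleton) := by
  obtain ⟨c, D, h1, h2, h3, h4, h5⟩ := goodCol _ Finset.univ G le_rfl (by simp) hG.1.1
  refine ⟨fun i => {e | ∃ u v, e = s(u, v) ∧ D u v ∧ c u = i}, fun i => {v | c v = i},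
    ?_, ?_, ?_, ?_⟩
  · intro i
    refine ⟨?_, ?_⟩
    · rintro e ⟨u, v, rfl, hD, hc⟩
      exact ⟨u, v, rfl, hc, fun h => h1 u v (h4 u v hD) (hc.trans h.symm)⟩
    · rintro v hv e ⟨⟨a, b, rfl, hD, hc⟩, hve⟩ e' ⟨⟨a', b', rfl, hD', hc'⟩, hve'⟩
      have hb : v = b := by
        rcases Sym2.mem_iff.1 hve with h | h
        · subst h; exact absurd hc hv
        · exact h
      have hb' : v = b' := by
        rcases Sym2.mem_iff.1 hve' with h | h
        · subst h; exact absurd hc' hv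
        · exact h
      subst hb
      subst hb'
      have : a = a' := by
        by_contra hne
        exact h5 a a' v hD hD' hne (hc.trans hc'.symm)
      rw [this]
  · intro i j hij
    rw [Set.disjoint_left]
    rintro e ⟨u, v, rfl, hD, hc⟩ ⟨u', v', he, hD', hc'⟩
    rcases Sym2.eq_iff.1 he with ⟨rfl, rfl⟩ | ⟨rfl, rfl⟩
    · exact hij (hc.symm.trans hc')
    · exact h3 _ _ hD hD'
  · ext e
    constructor
    · rintro ((⟨u, v, rfl, hD, hc⟩ | ⟨u, v, rfl, hD, hc⟩) | ⟨u, v, rfl, hD, hc⟩) <;>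
      exact h4 u v hD
    · induction e with
      | h u v =>
        intro h
        have key : ∀ u v, D u v → s(u, v) ∈ {e | ∃ u v, e = s(u, v) ∧ D u v ∧ c u = 0} ∪
            {e | ∃ u v, e = s(u, v) ∧ D u v ∧ c u = 1} ∪
            {e | ∃ u v, e = s(u, v) ∧ D u v ∧ c u = 2} := by
          intro u v hD
          have : c u = 0 ∨ c u = 1 ∨ c u = 2 := by
            generalize c u = k
            fin_cases k <;> simp
          rcases this with h | h | h
          · exact Or.inl (Or.inl ⟨u, v, rfl, hD, h⟩)
          · exact Or.inl (Or.inr ⟨u, v, rfl, hD, h⟩)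
          · exact Or.inr ⟨u, v, rfl, hD, h⟩
        rcases h2 u v h with hD | hD
        · exact key u v hD
        · rw [Sym2.eq_swap]; exact key v u hD
  · intro v i hi j hj
    exact hi.symm.trans hj
end

section
/- Every bipartite planar graph can be edge-partitioned into four star forests, two of which have all their star centers in the first part of the bipartition and two in the second part. -/
open SimpleGraph

namespace Aux

def Conn {V : Type*} (G : SimpleGraph V) (B : Finset V) : Prop :=
  B.Nonempty ∧ ∀ A ⊆ B, A.Nonempty → (∀ u ∈ A, ∀ v ∈ B, G.Adj u v → v ∈ A) → A = B

def Touch {V : Type*} (G : SimpleGraph V) (A B : Finset V) : Prop :=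
  ∃ u ∈ A, ∃ v ∈ B, G.Adj u v

def Minor {V W : Type*} (G : SimpleGraph V) (H : SimpleGraph W) : Prop :=
  ∃ f : W → Finset V, (∀ w, Conn G (f w)) ∧
    (∀ w₁ w₂, w₁ ≠ w₂ → Disjoint (f w₁) (f w₂)) ∧
    (∀ w₁ w₂, H.Adj w₁ w₂ → Touch G (f w₁) (f w₂))

def Pl {V : Type*} (G : SimpleGraph V) : Prop :=
  ¬ Minor G (completeGraph (Fin 5)) ∧ ¬ Minor G (completeBipartiteGraph (Fin 3) (Fin 3))

theorem Touch.symm {V : Type*} {G : SimpleGraph V} {A B : Finset V} (h : Touch G A B) :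
    Touch G B A := by
  obtain ⟨u, hu, v, hv, h⟩ := h
  exact ⟨v, hv, u, hu, h.symm⟩

theorem Conn.induce {V : Type*} {G : SimpleGraph V} {B : Finset V} (h : Conn G B) :
    (G.induce (B : Set V)).Connected := by
  classical
  obtain ⟨⟨b, hb⟩, h⟩ := h
  have : Nonempty (B : Set V) := ⟨⟨b, hb⟩⟩
  refine ⟨?_⟩
  have key : ∀ u : (B : Set V), (G.induce (B : Set V)).Reachable ⟨b, hb⟩ u := by
    have := h (B.filter fun u => ∃ hu : u ∈ (B : Set V),
      (G.induce (B : Set V)).Reachable ⟨b, hb⟩ ⟨u, hu⟩) (Finset.filter_subset _ _)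
      ⟨b, by simp only [Finset.mem_filter]; exact ⟨hb, hb, SimpleGraph.Reachable.refl _⟩⟩ (by
        intro u hu v hv huv
        simp only [Finset.mem_filter] at hu ⊢
        obtain ⟨_, hu, hr⟩ := hu
        refine ⟨hv, hv, hr.trans (SimpleGraph.Adj.reachable ?_)⟩
        exact huv)
    rintro ⟨u, hu⟩
    have h2 : u ∈ B := hu
    rw [← this] at h2
    simp only [Finset.mem_filter] at h2
    exact h2.2.2
  intro u v
  exact (key u).symm.trans (key v)

theorem Minor.hasMinor {V W : Type*} {G : SimpleGraph V} {H : SimpleGraph W} (h : Minor G H) :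
    G.HasMinor H := by
  obtain ⟨f, h1, h2, h3⟩ := h
  refine ⟨fun w => (f w : Set V), fun w => by simpa using (h1 w).1, fun w => (h1 w).induce,
    fun a b hab => by simpa using h2 a b hab, fun a b hab => ?_⟩
  obtain ⟨u, hu, v, hv, h⟩ := h3 a b hab
  exact ⟨u, by simpa using hu, v, by simpa using hv, h⟩

theorem Conn.mono {V : Type*} {G G' : SimpleGraph V} (hle : ∀ u v, G'.Adj u v → G.Adj u v)
    {B : Finset V} (h : Conn G' B) : Conn G B :=
  ⟨h.1, fun A hA hn hc => h.2 A hA hn fun u hu v hv huv => hc u hu v hv (hle _ _ huv)⟩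

theorem Minor.mono {V W : Type*} {G G' : SimpleGraph V} (hle : ∀ u v, G'.Adj u v → G.Adj u v)
    {H : SimpleGraph W} (h : Minor G' H) : Minor G H := by
  obtain ⟨f, h1, h2, h3⟩ := h
  refine ⟨f, fun w => (h1 w).mono hle, h2, fun a b hab => ?_⟩
  obtain ⟨u, hu, v, hv, h⟩ := h3 a b hab
  exact ⟨u, hu, v, hv, hle _ _ h⟩

theorem Pl.mono {V : Type*} {G G' : SimpleGraph V} (hle : ∀ u v, G'.Adj u v → G.Adj u v)
    (h : Pl G) : Pl G' := ⟨fun m => h.1 (m.mono hle), fun m => h.2 (m.mono hle)⟩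

/-- contraction of `y` into `x` -/
def contr {V : Type*} (G : SimpleGraph V) (x y : V) : SimpleGraph V where
  Adj u v := u ≠ v ∧ u ≠ y ∧ v ≠ y ∧ (G.Adj u v ∨ (u = x ∧ G.Adj y v) ∨ (v = x ∧ G.Adj y u))
  symm := ⟨by
    rintro u v ⟨h1, h2, h3, h4⟩
    refine ⟨h1.symm, h3, h2, ?_⟩
    rcases h4 with h | h | h
    · exact Or.inl h.symm
    · exact Or.inr (Or.inr h)
    · exact Or.inr (Or.inl h)⟩
  loopless := ⟨fun u h => h.1 rfl⟩

theorem Conn.single {V : Type*} (G : SimpleGraph V) (v : V) : Conn G {v} := by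
  refine ⟨by simp, fun A hA hn _ => ?_⟩
  exact (Finset.subset_singleton_iff.1 hA).resolve_left hn.ne_empty

theorem Minor.of_contr {V W : Type*} {G : SimpleGraph V} {x y : V} (hxy : G.Adj x y)
    {H : SimpleGraph W} (h : Minor (contr G x y) H)
    (hH : ∀ w : W, ∃ w', H.Adj w w') : Minor G H := by
  classical
  obtain ⟨f, h1, h2, h3⟩ := h
  have hy : ∀ w, y ∉ f w := by
    intro w hw
    have h4 := (h1 w).2 {y} (by simpa using hw) (by simp) (by
      intro u hu v hv huv
      simp at hu; subst hu
      exact absurd rfl huv.2.1)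
    obtain ⟨w', hw'⟩ := hH w
    obtain ⟨u, hu, v, hv, h⟩ := h3 _ _ hw'
    rw [← h4] at hu
    simp at hu
    exact h.2.1 hu
  refine ⟨fun w => if x ∈ f w then insert y (f w) else f w, fun w => ?_, fun a b hab => ?_,
    fun a b hab => ?_⟩
  · have hc := h1 w
    have hyw := hy w
    obtain ⟨hne, hc⟩ := hc
    show Conn G (if x ∈ f w then insert y (f w) else f w)
    split_ifs with hx
    · refine ⟨by simp, fun A hA hn hcl => ?_⟩
      have hyx : x ∈ A → y ∈ A := fun h => hcl x h y (by simp) hxy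
      have hxy' : y ∈ A → x ∈ A := fun h => hcl y h x (by simp [hx]) hxy.symm
      have hxA : x ∈ A := by
        by_cases hyA : y ∈ A
        · exact hxy' hyA
        have := hc A (by grind) hn (by
          intro u hu v hv huv
          obtain ⟨h1, h2, h3, h4⟩ := huv
          grind [G.adj_comm])
        rw [this]; exact hx
      have := hc (A.erase y) (by grind) ⟨x, by simp [hxA, hxy.ne]⟩ (by
          intro u hu v hv huv
          obtain ⟨h1, h2, h3, h4⟩ := huv
          have e1 : u ∈ A := by grind
          have e2 : y ∈ A := hyx hxA
          have : v ∈ A := by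
            rcases h4 with h4 | h4 | h4
            · exact hcl u e1 v (by grind) h4
            · exact hcl y e2 v (by grind) h4.2
            · rw [h4.1]; exact hxA
          grind)
      grind
    · refine ⟨hne, fun A hA hn hcl => hc A hA hn ?_⟩
      intro u hu v hv huv
      obtain ⟨h1, h2, h3, h4⟩ := huv
      grind
  · have h2 := h2 a b hab
    have := hy a
    have := hy b
    rw [Finset.disjoint_left] at h2 ⊢
    grind
  · obtain ⟨u, hu, v, hv, h1, h2, h3, h4⟩ := h3 a b hab
    rcases h4 with h4 | h4 | h4
    · exact ⟨u, by grind, v, by grind, h4⟩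
    · exact ⟨y, by grind, v, by grind, h4.2⟩
    · exact ⟨u, by grind, y, by grind, h4.2.symm⟩

theorem Pl.contr {V : Type*} {G : SimpleGraph V} {x y : V} (hxy : G.Adj x y) (h : Pl G) :
    Pl (contr G x y) := by
  refine ⟨fun m => h.1 (m.of_contr hxy ?_), fun m => h.2 (m.of_contr hxy ?_)⟩
  · intro w
    exact ⟨w + 1, by simp⟩
  · rintro (w | w)
    · exact ⟨Sum.inr 0, by simp⟩
    · exact ⟨Sum.inl 0, by simp⟩

theorem K33 {V : Type*} {G : SimpleGraph V} (hG : Pl G) (p q : Fin 3 → Finset V)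
    (hp : ∀ i, Conn G (p i)) (hq : ∀ i, Conn G (q i))
    (hpp : ∀ i j, i ≠ j → Disjoint (p i) (p j)) (hqq : ∀ i j, i ≠ j → Disjoint (q i) (q j))
    (hpq : ∀ i j, Disjoint (p i) (q j)) (ht : ∀ i j, Touch G (p i) (q j)) : False := by
  apply hG.2
  refine ⟨Sum.elim p q, ?_, ?_, ?_⟩
  · rintro (i | i)
    · exact hp i
    · exact hq i
  · rintro (i | i) (j | j) h
    · exact hpp i j (by simpa using h)
    · exact hpq i j
    · exact (hpq j i).symm
    · exact hqq i j (by simpa using h)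
  · rintro (i | i) (j | j) h
    · simp at h
    · exact ht i j
    · exact (ht j i).symm
    · simp at h

theorem K5 {V : Type*} {G : SimpleGraph V} (hG : Pl G) {x y : V} (hxy : G.Adj x y)
    (N : Fin 3 → Finset V) (hN : ∀ i, Conn G (N i))
    (hd : ∀ i j, i ≠ j → Disjoint (N i) (N j)) (hx : ∀ i, x ∉ N i) (hy : ∀ i, y ∉ N i)
    (hxt : ∀ i, Touch G {x} (N i)) (hyt : ∀ i, Touch G {y} (N i))
    (ht : ∀ i j, i ≠ j → Touch G (N i) (N j)) : False := by
  apply hG.1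
  have txy : Touch G {x} {y} := ⟨x, by simp, y, by simp, hxy⟩
  have hne := hxy.ne
  refine ⟨Fin.cons {x} (Fin.cons {y} N), ?_, ?_, ?_⟩
  · intro i
    refine Fin.cases (Conn.single _ _) (fun i => ?_) i
    exact Fin.cases (Conn.single _ _) (fun i => hN i) i
  · intro i j
    refine Fin.cases ?_ (fun i => Fin.cases ?_ (fun i => ?_) i) i <;>
    refine Fin.cases ?_ (fun j => Fin.cases ?_ (fun j => ?_) j) j <;>
      simp_all
    exact fun h => hne h.symm
  · intro i j
    rw [completeGraph, SimpleGraph.top_adj]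
    refine Fin.cases ?_ (fun i => Fin.cases ?_ (fun i => ?_) i) i <;>
    refine Fin.cases ?_ (fun j => Fin.cases ?_ (fun j => ?_) j) j <;>
      simp_all [Touch.symm]

theorem exists_comp {V : Type*} (G : SimpleGraph V) (R : Finset V) (v : V) (hv : v ∈ R) :
    ∃ H ⊆ R, v ∈ H ∧ (∀ u ∈ H, ∀ w ∈ R, G.Adj u w → w ∈ H) ∧ Conn G H := by
  classical
  let H := R.filter fun w => ∀ A ⊆ R, v ∈ A → (∀ u ∈ A, ∀ w ∈ R, G.Adj u w → w ∈ A) → w ∈ A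
  have hvH : v ∈ H := by simp only [H, Finset.mem_filter]; exact ⟨hv, fun A _ h _ => h⟩
  have hHR : H ⊆ R := Finset.filter_subset _ _
  have hcl : ∀ u ∈ H, ∀ w ∈ R, G.Adj u w → w ∈ H := by
    intro u hu w hw huw
    simp only [H, Finset.mem_filter] at hu ⊢
    exact ⟨hw, fun A hA hvA hA' => hA' u (hu.2 A hA hvA hA') w hw huw⟩
  have hmin : ∀ A ⊆ R, v ∈ A → (∀ u ∈ A, ∀ w ∈ R, G.Adj u w → w ∈ A) → H ⊆ A := by
    intro A hA hvA hA' w hw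
    simp only [H, Finset.mem_filter] at hw
    exact hw.2 A hA hvA hA'
  refine ⟨H, hHR, hvH, hcl, ⟨v, hvH⟩, fun A hA hn hc => ?_⟩
  have hAc : ∀ u ∈ A, ∀ w ∈ R, G.Adj u w → w ∈ A := fun u hu w hw huw =>
    hc u hu w (hcl u (hA hu) w hw huw) huw
  by_cases hvA : v ∈ A
  · exact hA.antisymm (hmin A (hA.trans hHR) hvA hAc)
  · exfalso
    have := hmin (H \ A) (by grind) (by grind) (by
      intro u hu w hw huw
      have := hcl u (by grind) w hw huw
      by_cases hwA : w ∈ A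
      · have := hc w hwA u (by grind) huw.symm
        grind
      · grind)
    obtain ⟨a, ha⟩ := hn
    have := this (hA ha)
    grind

def NonSep {V : Type*} [DecidableEq V] (G : SimpleGraph V) (S C : Finset V) : Prop :=
  ∀ A ⊆ S \ C, A.Nonempty → (∀ u ∈ A, ∀ v ∈ S \ C, G.Adj u v → v ∈ A) → A = S \ C

/-- Generic: a theta with outside component. -/
theorem theta {V : Type*} [DecidableEq V] {G : SimpleGraph V} (hG : Pl G) {p q : V} (hpq : p ≠ q)
    (M : Fin 3 → Finset V) (hM : ∀ i, Conn G (M i))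
    (hd : ∀ i j, i ≠ j → Disjoint (M i) (M j)) (hp : ∀ i, p ∉ M i) (hq : ∀ i, q ∉ M i)
    (hpt : ∀ i, Touch G {p} (M i)) (hqt : ∀ i, Touch G {q} (M i))
    (H : Finset V) (hH : Conn G H) (hpH : p ∉ H) (hqH : q ∉ H) (hHM : ∀ i, Disjoint H (M i))
    (hHt : ∀ i, Touch G H (M i)) : False := by
  refine K33 hG ![{p}, {q}, H] M ?_ hM ?_ hd ?_ ?_
  · intro i; fin_cases i
    · exact Conn.single _ _
    · exact Conn.single _ _
    · exact hH
  · intro i j; fin_cases i <;> fin_cases j <;> simp_all [eq_comm]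
  · intro i j; fin_cases i <;> simp_all
  · intro i j; fin_cases i <;> simp_all

end Aux
namespace Aux

open Classical in
noncomputable def cn {V : Type*} [Fintype V] (G : SimpleGraph V) (x y : V) : Finset V :=
  Finset.univ.filter fun z => G.Adj x z ∧ G.Adj y z

open Classical in
noncomputable def Q {V : Type*} [Fintype V] (G : SimpleGraph V) (x y : V) : Finset (V × V) :=
  Finset.univ.filter fun p => G.Adj x p.1 ∧ p.1 ≠ y ∧ G.Adj y p.2 ∧ p.2 ≠ x ∧ G.Adj p.1 p.2

structure Crit {V : Type*} [Fintype V] [DecidableEq V] (G : SimpleGraph V) (S : Finset V) : Prop where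
  pl : Pl G
  supp : ∀ u v, G.Adj u v → u ∈ S
  h1 : ∀ x y z w, G.Adj x y → G.Adj x z → G.Adj y z → G.Adj x w → G.Adj y w → z = w
  h2 : ∀ x y, G.Adj x y → 3 ≤ (cn G x y).card + (Q G x y).card
  h3 : ∀ x y z, G.Adj x y → G.Adj x z → G.Adj y z → NonSep G S {x, y, z}
  h4 : ∀ x a b y, G.Adj x a → G.Adj a b → G.Adj b y → G.Adj x y → x ≠ b → a ≠ y →
    NonSep G S {x, y, a, b}

variable {V : Type*} [Fintype V] [DecidableEq V] {G : SimpleGraph V} {S : Finset V}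

theorem touch_of_nonSep {C R H M : Finset V} (hC : NonSep G S C) (hR : ∀ v ∈ R, v ∈ S \ C)
    (hRC : ∀ v ∈ S \ C, v ∈ R ∨ v ∈ M) (hHR : H ⊆ R) (hn : H.Nonempty)
    (hcl : ∀ u ∈ H, ∀ w ∈ R, G.Adj u w → w ∈ H) {m : V} (hm : m ∈ S \ C) (hmR : m ∉ R) :
    Touch G H M := by
  by_contra hT
  have := hC H (fun v hv => hR v (hHR hv)) hn (by
    intro u hu v hv huv
    rcases hRC v hv with h | h
    · exact hcl u hu v h huv
    · exact absurd ⟨u, hu, v, h, huv⟩ hT)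
  rw [← this] at hm
  exact hmR (hHR hm)

theorem Crit.noK23 (h : Crit G S) {p q a b c : V} (hpq : p ≠ q) (hab : a ≠ b) (hac : a ≠ c)
    (hbc : b ≠ c) (pa : G.Adj p a) (pb : G.Adj p b) (pc : G.Adj p c)
    (qa : G.Adj q a) (qb : G.Adj q b) (qc : G.Adj q c) : False := by
  have nab : ¬ G.Adj a b := fun e => hpq (h.h1 a b p q e pa.symm pb.symm qa.symm qb.symm)
  have nac : ¬ G.Adj a c := fun e => hpq (h.h1 a c p q e pa.symm pc.symm qa.symm qc.symm)
  have npq : ¬ G.Adj p q := fun e => hab (h.h1 p q a b e pa qa pb qb)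
  have := pa.ne; have := pb.ne; have := pc.ne; have := qa.ne; have := qb.ne; have := qc.ne
  have sa := h.supp _ _ pa.symm
  have sb := h.supp _ _ pb.symm
  have sc := h.supp _ _ pc.symm
  obtain ⟨v, hv⟩ : (S \ {p, q, a, b, c}).Nonempty := by
    by_contra hne
    have hS : ∀ v ∈ S, v = p ∨ v = q ∨ v = a ∨ v = b ∨ v = c := by
      intro v hv
      by_contra hv'
      exact hne ⟨v, by simp [hv]; tauto⟩
    have e1 : cn G a q = ∅ := by
      ext z
      simp only [cn, Finset.mem_filter, Finset.mem_univ, true_and, Finset.notMem_empty, iff_false]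
      rintro ⟨z1, z2⟩
      rcases hS z (h.supp _ _ z1.symm) with rfl | rfl | rfl | rfl | rfl
      · exact npq z2.symm
      · exact z2.ne rfl
      · exact z1.ne rfl
      · exact nab z1
      · exact nac z1
    have e2 : Q G a q ⊆ {(p, b), (p, c)} := by
      rintro ⟨u, w⟩ hz
      simp only [Q, Finset.mem_filter, Finset.mem_univ, true_and] at hz
      obtain ⟨z1, z2, z3, z4, z5⟩ := hz
      have : u = p := by
        rcases hS u (h.supp _ _ z1.symm) with rfl | rfl | rfl | rfl | rfl
        · rfl
        · exact absurd rfl z2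
        · exact absurd rfl z1.ne
        · exact absurd z1 nab
        · exact absurd z1 nac
      subst this
      rcases hS w (h.supp _ _ z3.symm) with rfl | rfl | rfl | rfl | rfl
      · exact absurd rfl z5.ne
      · exact absurd rfl z3.ne
      · exact absurd rfl z4
      · simp
      · simp
    have e3 := h.h2 a q qa.symm
    have e4 := Finset.card_le_card e2
    have e5 := Finset.card_le_two (a := (p, b)) (b := (p, c))
    rw [e1, Finset.card_empty] at e3
    omega
  obtain ⟨H, hHR, hvH, hcl, hH⟩ := exists_comp G _ v hv
  have ta : Touch G H {a} := touch_of_nonSep (m := a)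
    (h.h4 p b q c pb qb.symm qc pc hpq hbc) (R := S \ {p, q, a, b, c})
    (by grind) (by grind) hHR hH.1 hcl (by grind) (by grind)
  have tb : Touch G H {b} := touch_of_nonSep (m := b)
    (h.h4 p a q c pa qa.symm qc pc hpq hac) (R := S \ {p, q, a, b, c})
    (by grind) (by grind) hHR hH.1 hcl (by grind) (by grind)
  have tc : Touch G H {c} := touch_of_nonSep (m := c)
    (h.h4 p a q b pa qa.symm qb pb hpq hab) (R := S \ {p, q, a, b, c})
    (by grind) (by grind) hHR hH.1 hcl (by grind) (by grind)
  refine theta h.pl hpq ![{a}, {b}, {c}] ?_ ?_ ?_ ?_ ?_ ?_ H hH ?_ ?_ ?_ ?_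
  · intro i; fin_cases i <;> exact Conn.single _ _
  · intro i j; fin_cases i <;> fin_cases j <;> simp_all [eq_comm]
  · intro i; fin_cases i <;> simp_all
  · intro i; fin_cases i <;> simp_all
  · intro i; fin_cases i <;> simp_all [Touch]
  · intro i; fin_cases i <;> simp_all [Touch]
  · grind
  · grind
  · intro i; fin_cases i <;> simp <;> grind
  · intro i; fin_cases i <;> simp_all

structure Mid (G : SimpleGraph V) (S : Finset V) (x y : V) (M : Finset V) : Prop where
  sub : M ⊆ S
  conn : Conn G M
  hx : x ∉ M
  hy : y ∉ M
  tx : Touch G {x} M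
  ty : Touch G {y} M
  ns : NonSep G S (insert x (insert y M))

theorem conn_union {A B : Finset V} (hA : Conn G A) (hB : Conn G B) (hT : Touch G A B) :
    Conn G (A ∪ B) := by
  obtain ⟨u, hu, v, hv, huv⟩ := hT
  refine ⟨⟨u, by simp [hu]⟩, fun D hD hn hc => ?_⟩
  have key : ∀ A : Finset V, A ⊆ A → Conn G A → (∀ z ∈ A, z ∈ A ∪ B ∨ True) → True := by simp
  have kA : (∃ z ∈ D, z ∈ A) → A ⊆ D := by
    rintro ⟨z, hz, hzA⟩
    have := hA.2 (D ∩ A) (by grind) ⟨z, by grind⟩ (by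
      intro s hs t ht hst
      have := hc s (by grind) t (by grind) hst
      grind)
    grind
  have kB : (∃ z ∈ D, z ∈ B) → B ⊆ D := by
    rintro ⟨z, hz, hzB⟩
    have := hB.2 (D ∩ B) (by grind) ⟨z, by grind⟩ (by
      intro s hs t ht hst
      have := hc s (by grind) t (by grind) hst
      grind)
    grind
  have hAB : A ⊆ D → B ⊆ D := fun h => kB ⟨v, hc u (h hu) v (by simp [hv]) huv, hv⟩
  have hBA : B ⊆ D → A ⊆ D := fun h => kA ⟨u, hc v (h hv) u (by simp [hu]) huv.symm, hu⟩
  obtain ⟨z, hz⟩ := hn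
  have hz' := hD hz
  rcases Finset.mem_union.1 hz' with h | h
  · have h1 := kA ⟨z, hz, h⟩
    exact hD.antisymm (Finset.union_subset h1 (hAB h1))
  · have h1 := kB ⟨z, hz, h⟩
    exact hD.antisymm (Finset.union_subset (hBA h1) h1)

/-- closed component of `R` -/
def IsC (G : SimpleGraph V) (R H : Finset V) : Prop :=
  H ⊆ R ∧ (∀ u ∈ H, ∀ w ∈ R, G.Adj u w → w ∈ H) ∧ Conn G H

theorem link {x y : V} {M₁ M₂ M₃ : Finset V}
    (m1 : Mid G S x y M₁) (m2 : Mid G S x y M₂) (m3 : Mid G S x y M₃)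
    (d12 : Disjoint M₁ M₂) (d13 : Disjoint M₁ M₃) (d23 : Disjoint M₂ M₃)
    {R : Finset V} (hR : R = S \ (insert x (insert y (M₁ ∪ M₂ ∪ M₃)))) :
    ∃ H : Finset V, (H = ∅ ∨ IsC G R H ∧ Touch G H M₁ ∧ Touch G H M₂) ∧
      Conn G (M₁ ∪ H) ∧ Touch G (M₁ ∪ H) M₂ := by
  classical
  by_cases t12 : Touch G M₁ M₂
  · exact ⟨∅, Or.inl rfl, by simpa using m1.conn, by simpa using t12⟩
  by_contra hcon
  have hno : ∀ H, IsC G R H → Touch G H M₁ → ¬ Touch G H M₂ := by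
    intro H hH t1 t2
    refine hcon ⟨H, Or.inr ⟨hH, t1, t2⟩, conn_union m1.conn hH.2.2 t1.symm, ?_⟩
    obtain ⟨u, hu, v, hv, huv⟩ := t2
    exact ⟨u, by simp [hu], v, hv, huv⟩
  have a1 := m1.sub; have a2 := m1.hx; have a3 := m1.hy
  have b1 := m2.sub; have b2 := m2.hx; have b3 := m2.hy
  rw [Finset.disjoint_left] at d12 d13 d23
  let A := M₁ ∪ R.filter fun r => ∃ H, IsC G R H ∧ r ∈ H ∧ Touch G H M₁
  have hA : ∀ z, z ∈ A ↔ z ∈ M₁ ∨ z ∈ R ∧ ∃ H, IsC G R H ∧ z ∈ H ∧ Touch G H M₁ := by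
    intro z; simp [A]
  have hRm : ∀ z, z ∈ R ↔ z ∈ S ∧ z ≠ x ∧ z ≠ y ∧ z ∉ M₁ ∧ z ∉ M₂ ∧ z ∉ M₃ := by
    intro z; rw [hR]; simp
  have hCm : ∀ z, z ∈ S \ insert x (insert y M₃) ↔ z ∈ S ∧ z ≠ x ∧ z ≠ y ∧ z ∉ M₃ := by
    intro z; simp
  obtain ⟨w, hw⟩ := m1.conn.1
  have := m3.ns A (by
      intro z hz
      rw [hA] at hz; rw [hCm]
      rcases hz with hz | hz
      · exact ⟨a1 hz, fun e => a2 (e ▸ hz), fun e => a3 (e ▸ hz), d13 hz⟩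
      · have := (hRm z).1 hz.1
        tauto) ⟨w, (hA w).2 (Or.inl hw)⟩ (by
      intro u hu v hv huv
      rw [hA] at hu ⊢
      rw [hCm] at hv
      by_cases hv1 : v ∈ M₁
      · exact Or.inl hv1
      right
      by_cases hv2 : v ∈ M₂
      · exfalso
        rcases hu with hu | ⟨hu, H, hH, huH, ht⟩
        · exact t12 ⟨u, hu, v, hv2, huv⟩
        · exact hno H hH ht ⟨u, huH, v, hv2, huv⟩
      have hvR : v ∈ R := by rw [hRm]; tauto
      refine ⟨hvR, ?_⟩
      rcases hu with hu | ⟨hu, H, hH, huH, ht⟩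
      · obtain ⟨H, h1, h2, h3, h4⟩ := exists_comp G R v hvR
        exact ⟨H, ⟨h1, h3, h4⟩, h2, v, h2, u, hu, huv.symm⟩
      · exact ⟨H, hH, hH.2.1 u huH v hvR huv, ht⟩)
  obtain ⟨w, hw⟩ := m2.conn.1
  have hwA : w ∈ A := by
    rw [this, hCm]
    exact ⟨b1 hw, fun e => b2 (e ▸ hw), fun e => b3 (e ▸ hw), d23 hw⟩
  rw [hA] at hwA
  rcases hwA with h | h
  · exact d12 h hw
  · have := (hRm w).1 h.1
    tauto

theorem isC_eq {R H K : Finset V} (h : IsC G R H) (k : IsC G R K) (hd : ¬ Disjoint H K) :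
    H = K := by
  rw [Finset.not_disjoint_iff] at hd
  obtain ⟨z, h1, h2⟩ := hd
  have e1 := h.2.2.2 (H ∩ K) (by grind) ⟨z, by grind⟩ (by
    intro u hu v hv huv
    have := k.2.1 u (by grind) v (h.1 hv) huv
    grind)
  have e2 := k.2.2.2 (H ∩ K) (by grind) ⟨z, by grind⟩ (by
    intro u hu v hv huv
    have := h.2.1 u (by grind) v (k.1 hv) huv
    grind)
  rw [← e1]; exact e2

theorem three_mids (hG : Pl G) {x y : V} (hxy : G.Adj x y) {M₁ M₂ M₃ : Finset V}
    (m1 : Mid G S x y M₁) (m2 : Mid G S x y M₂) (m3 : Mid G S x y M₃)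
    (d12 : Disjoint M₁ M₂) (d13 : Disjoint M₁ M₃) (d23 : Disjoint M₂ M₃) : False := by
  obtain ⟨R, hR⟩ : ∃ R, R = S \ (insert x (insert y (M₁ ∪ M₂ ∪ M₃))) := ⟨_, rfl⟩
  have hRm : ∀ z, z ∈ R → z ≠ x ∧ z ≠ y ∧ z ∉ M₁ ∧ z ∉ M₂ ∧ z ∉ M₃ := by
    intro z; rw [hR]; simp
  obtain ⟨H₁, c1, n1, t1⟩ := link m1 m2 m3 d12 d13 d23 hR
  obtain ⟨H₂, c2, n2, t2⟩ := link m2 m3 m1 d23 d12.symm d13.symm (R := R) (by rw [hR]; congr 3; grind)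
  obtain ⟨H₃, c3, n3, t3⟩ := link m3 m1 m2 d13.symm d23.symm d12 (R := R) (by rw [hR]; congr 3; grind)
  have noall : ∀ H, IsC G R H → Touch G H M₁ → Touch G H M₂ → Touch G H M₃ → False := by
    intro H hH s1 s2 s3
    have r1 : ∀ z ∈ H, z ≠ x ∧ z ≠ y ∧ z ∉ M₁ ∧ z ∉ M₂ ∧ z ∉ M₃ := fun z hz => hRm z (hH.1 hz)
    refine theta hG hxy.ne ![M₁, M₂, M₃] ?_ ?_ ?_ ?_ ?_ ?_ H hH.2.2
      (fun h => (r1 x h).1 rfl) (fun h => (r1 y h).2.1 rfl) ?_ ?_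
    · intro i; fin_cases i <;> simp [m1.conn, m2.conn, m3.conn]
    · intro i j; fin_cases i <;> fin_cases j <;> simp [d12, d13, d23, d12.symm, d13.symm, d23.symm]
    · intro i; fin_cases i <;> simp [m1.hx, m2.hx, m3.hx]
    · intro i; fin_cases i <;> simp [m1.hy, m2.hy, m3.hy]
    · intro i; fin_cases i <;> simp [m1.tx, m2.tx, m3.tx]
    · intro i; fin_cases i <;> simp [m1.ty, m2.ty, m3.ty]
    · intro i; fin_cases i <;> simp [Finset.disjoint_left] <;> grind
    · intro i; fin_cases i <;> simp [s1, s2, s3]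
  have s1 : ∀ z ∈ H₁, z ∈ R := by
    rcases c1 with rfl | c
    · simp
    · exact fun z hz => c.1.1 hz
  have s2 : ∀ z ∈ H₂, z ∈ R := by
    rcases c2 with rfl | c
    · simp
    · exact fun z hz => c.1.1 hz
  have s3 : ∀ z ∈ H₃, z ∈ R := by
    rcases c3 with rfl | c
    · simp
    · exact fun z hz => c.1.1 hz
  have e12 : Disjoint H₁ H₂ := by
    by_contra hd
    rcases c1 with rfl | c1
    · simp at hd
    rcases c2 with rfl | c2
    · simp at hd
    obtain rfl := isC_eq c1.1 c2.1 hd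
    exact noall _ c1.1 c1.2.1 c1.2.2 c2.2.2
  have e23 : Disjoint H₂ H₃ := by
    by_contra hd
    rcases c2 with rfl | c2
    · simp at hd
    rcases c3 with rfl | c3
    · simp at hd
    obtain rfl := isC_eq c2.1 c3.1 hd
    exact noall _ c2.1 c3.2.2 c2.2.1 c2.2.2
  have e13 : Disjoint H₁ H₃ := by
    by_contra hd
    rcases c1 with rfl | c1
    · simp at hd
    rcases c3 with rfl | c3
    · simp at hd
    obtain rfl := isC_eq c1.1 c3.1 hd
    exact noall _ c1.1 c1.2.1 c1.2.2 c3.2.1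
  have T1 : Touch G (M₁ ∪ H₁) (M₂ ∪ H₂) := by
    obtain ⟨u, hu, v, hv, huv⟩ := t1
    exact ⟨u, hu, v, by simp [hv], huv⟩
  have T2 : Touch G (M₂ ∪ H₂) (M₃ ∪ H₃) := by
    obtain ⟨u, hu, v, hv, huv⟩ := t2
    exact ⟨u, hu, v, by simp [hv], huv⟩
  have T3 : Touch G (M₃ ∪ H₃) (M₁ ∪ H₁) := by
    obtain ⟨u, hu, v, hv, huv⟩ := t3
    exact ⟨u, hu, v, by simp [hv], huv⟩
  have mono : ∀ {A B C : Finset V}, Touch G A B → Touch G A (B ∪ C) := by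
    rintro A B C ⟨u, hu, v, hv, huv⟩
    exact ⟨u, hu, v, by simp [hv], huv⟩
  have x1 := m1.hx; have x2 := m2.hx; have x3 := m3.hx
  have y1 := m1.hy; have y2 := m2.hy; have y3 := m3.hy
  have D12 : Disjoint (M₁ ∪ H₁) (M₂ ∪ H₂) := by
    rw [Finset.disjoint_left] at *; grind
  have D13 : Disjoint (M₁ ∪ H₁) (M₃ ∪ H₃) := by
    rw [Finset.disjoint_left] at *; grind
  have D23 : Disjoint (M₂ ∪ H₂) (M₃ ∪ H₃) := by
    rw [Finset.disjoint_left] at *; grind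
  refine K5 hG hxy ![M₁ ∪ H₁, M₂ ∪ H₂, M₃ ∪ H₃] ?_ ?_ ?_ ?_ ?_ ?_ ?_
  · intro i; fin_cases i <;> simp [n1, n2, n3]
  · intro i j; fin_cases i <;> fin_cases j <;> simp only [Fin.zero_eta, Fin.mk_one, Fin.reduceFinMk, Matrix.cons_val, D12, D13, D23, D12.symm, D13.symm, D23.symm, ne_eq, not_true_eq_false, false_imp_iff, implies_true]
  · intro i; fin_cases i <;> simp <;> grind
  · intro i; fin_cases i <;> simp <;> grind
  · intro i; fin_cases i <;> simp [m1.tx, m2.tx, m3.tx, mono]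
  · intro i; fin_cases i <;> simp [m1.ty, m2.ty, m3.ty, mono]
  · intro i j; fin_cases i <;> fin_cases j <;> simp [T1, T2, T3, T1.symm, T2.symm, T3.symm]

theorem Crit.mid2 (h : Crit G S) {x y : V} (hxy : G.Adj x y) {p : V × V} (hp : p ∈ Q G x y) :
    Mid G S x y {p.1, p.2} := by
  obtain ⟨a, b⟩ := p
  simp only [Q, Finset.mem_filter, Finset.mem_univ, true_and] at hp
  obtain ⟨z1, z2, z3, z4, z5⟩ := hp
  have := z1.ne; have := z3.ne
  refine ⟨?_, ?_, by simp; grind, by simp; grind, ⟨x, by simp, a, by simp, z1⟩,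
    ⟨y, by simp, b, by simp, z3⟩, h.h4 x a b y z1 z5 z3.symm hxy (Ne.symm z4) z2⟩
  · intro z hz
    simp at hz
    rcases hz with rfl | rfl
    · exact h.supp _ _ z1.symm
    · exact h.supp _ _ z3.symm
  · have := conn_union (Conn.single G a) (Conn.single G b) ⟨a, by simp, b, by simp, z5⟩
    exact this

theorem Crit.mid1 (h : Crit G S) {x y : V} (hxy : G.Adj x y) {z : V} (hz : z ∈ cn G x y) :
    Mid G S x y {z} := by
  simp only [cn, Finset.mem_filter, Finset.mem_univ, true_and] at hz
  obtain ⟨z1, z2⟩ := hz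
  have := z1.ne; have := z2.ne
  refine ⟨?_, Conn.single _ _, by simp; grind, by simp; grind, ⟨x, by simp, z, by simp, z1⟩,
    ⟨y, by simp, z, by simp, z2⟩, h.h3 x y z hxy z1 z2⟩
  simpa using h.supp _ _ z1.symm

theorem Crit.disj22 (h : Crit G S) {x y : V} (hxy : G.Adj x y) {p q : V × V} (hp : p ∈ Q G x y)
    (hq : q ∈ Q G x y) (hpq : p ≠ q) : Disjoint ({p.1, p.2} : Finset V) {q.1, q.2} := by
  obtain ⟨a, b⟩ := p
  obtain ⟨c, d⟩ := q
  simp only [Q, Finset.mem_filter, Finset.mem_univ, true_and] at hp hq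
  obtain ⟨z1, z2, z3, z4, z5⟩ := hp
  obtain ⟨w1, w2, w3, w4, w5⟩ := hq
  have e1 : a ≠ c := by
    rintro rfl
    have hbd : b ≠ d := by rintro rfl; exact hpq rfl
    exact h.noK23 (p := a) (q := y) z2 (Ne.symm z4) (Ne.symm w4) hbd z1.symm z5 w5 hxy.symm z3 w3
  have e2 : b ≠ d := by
    rintro rfl
    exact h.noK23 (p := x) (q := b) (Ne.symm z4) (Ne.symm z2) (Ne.symm w2) e1 hxy z1 w1
      z3.symm z5.symm w5.symm
  have e3 : a ≠ d := by
    rintro rfl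
    exact z4 (h.h1 y a b x w3 z3 z5 hxy.symm z1.symm)
  have e4 : b ≠ c := by
    rintro rfl
    exact w4 (h.h1 y b d x z3 w3 w5 hxy.symm w1.symm)
  simp [Finset.disjoint_left]
  grind

theorem Crit.disj12 (h : Crit G S) {x y : V} (hxy : G.Adj x y) {p : V × V} (hp : p ∈ Q G x y)
    {z : V} (hz : z ∈ cn G x y) : Disjoint ({p.1, p.2} : Finset V) {z} := by
  obtain ⟨a, b⟩ := p
  simp only [Q, cn, Finset.mem_filter, Finset.mem_univ, true_and] at hp hz
  obtain ⟨z1, z2, z3, z4, z5⟩ := hp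
  have e1 : a ≠ z := by
    rintro rfl
    exact z4 (h.h1 y a b x hz.2 z3 z5 hxy.symm z1.symm)
  have e2 : b ≠ z := by
    rintro rfl
    exact z2 (h.h1 x b a y hz.1 z1 z5.symm hxy z3.symm)
  simp [Finset.disjoint_left]
  grind

theorem Crit.false (h : Crit G S) {x y : V} (hxy : G.Adj x y) : False := by
  have h2 := h.h2 x y hxy
  have hc : (cn G x y).card ≤ 1 := by
    rw [Finset.card_le_one]
    intro a ha b hb
    simp only [cn, Finset.mem_filter, Finset.mem_univ, true_and] at ha hb
    exact h.h1 x y a b hxy ha.1 ha.2 hb.1 hb.2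
  by_cases hq : 2 < (Q G x y).card
  · obtain ⟨p, q, r, hp, hq, hr, h1, h2, h3⟩ := Finset.two_lt_card_iff.1 hq
    exact three_mids h.pl hxy (h.mid2 hxy hp) (h.mid2 hxy hq) (h.mid2 hxy hr)
      (h.disj22 hxy hp hq h1) (h.disj22 hxy hp hr h2) (h.disj22 hxy hq hr h3)
  · obtain ⟨p, q, hp, hq, hpq⟩ := Finset.one_lt_card_iff.1 (show 1 < (Q G x y).card by omega)
    obtain ⟨z, hz⟩ := Finset.card_pos.1 (show 0 < (cn G x y).card by omega)
    exact three_mids h.pl hxy (h.mid2 hxy hp) (h.mid2 hxy hq) (h.mid1 hxy hz)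
      (h.disj22 hxy hp hq hpq) (h.disj12 hxy hp hz) (h.disj12 hxy hq hz)

end Aux
namespace Aux

variable {V : Type*} [Fintype V] [DecidableEq V] {G : SimpleGraph V} {S : Finset V}

open Classical in
noncomputable def ed {V : Type*} [Fintype V] (G : SimpleGraph V) : Finset (Sym2 V) :=
  Finset.univ.filter fun e => e ∈ G.edgeSet

open Classical in
noncomputable def tr {V : Type*} [Fintype V] (G : SimpleGraph V) : Finset (Finset V) :=
  Finset.univ.filter fun s => ∃ a b c, G.Adj a b ∧ G.Adj a c ∧ G.Adj b c ∧ s = {a, b, c}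

theorem mem_ed {u v : V} : s(u, v) ∈ ed G ↔ G.Adj u v := by simp [ed]

theorem mem_tr {s : Finset V} :
    s ∈ tr G ↔ ∃ a b c, G.Adj a b ∧ G.Adj a c ∧ G.Adj b c ∧ s = {a, b, c} := by
  simp only [tr, Finset.mem_filter, Finset.mem_univ, true_and]
  constructor
  · rintro ⟨a, b, c, h1, h2, h3, h4⟩
    exact ⟨a, b, c, h1, h2, h3, by rw [h4]; ext; simp⟩
  · rintro ⟨a, b, c, h1, h2, h3, h4⟩
    exact ⟨a, b, c, h1, h2, h3, by rw [h4]; ext; simp⟩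

theorem mem_tr_of_mem {s : Finset V} {x : V} (hs : s ∈ tr G) (hx : x ∈ s) :
    ∃ u v, G.Adj x u ∧ G.Adj x v ∧ G.Adj u v ∧ s = {x, u, v} := by
  rw [mem_tr] at hs
  obtain ⟨a, b, c, h1, h2, h3, rfl⟩ := hs
  simp at hx
  rcases hx with rfl | rfl | rfl
  · exact ⟨b, c, h1, h2, h3, rfl⟩
  · exact ⟨a, c, h1.symm, h3, h2, by grind⟩
  · exact ⟨a, b, h2.symm, h3.symm, h1, by grind⟩

def Bd (G : SimpleGraph V) (S : Finset V) : Prop := 2 * (ed G).card + 8 ≤ 4 * S.card + (tr G).card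

theorem step_del {x y z w : V} (xy : G.Adj x y) (xz : G.Adj x z) (yz : G.Adj y z)
    (xw : G.Adj x w) (yw : G.Adj y w) (hzw : z ≠ w)
    (ih : Bd (G.deleteEdges {s(x, y)}) S) : Bd G S := by
  set G' := G.deleteEdges {s(x, y)} with hG'
  have ha : ∀ u v, G'.Adj u v ↔ G.Adj u v ∧ s(u, v) ≠ s(x, y) := by
    intro u v; simp [hG', SimpleGraph.deleteEdges_adj]
  have e1 : (ed G).card ≤ (ed G').card + 1 := by
    have : ed G ⊆ insert s(x, y) (ed G') := by
      intro e
      induction e using Sym2.ind with | _ u v =>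
      intro h
      rw [mem_ed] at h
      rw [Finset.mem_insert, mem_ed, ha]
      tauto
    exact (Finset.card_le_card this).trans (Finset.card_insert_le _ _)
  have e2 : (tr G').card + 2 ≤ (tr G).card := by
    have no : ∀ s ∈ tr G', x ∈ s → y ∈ s → False := by
      intro s hs hx hy
      obtain ⟨u, v, h1, h2, h3, rfl⟩ := mem_tr_of_mem hs hx
      have := xy.ne
      simp at hy
      rcases hy with rfl | rfl | rfl
      · exact this rfl
      · exact ((ha _ _).1 h1).2 rfl
      · exact ((ha _ _).1 h2).2 rfl
    have hsub : insert {x, y, z} (insert {x, y, w} (tr G')) ⊆ tr G := by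
      intro s hs
      simp only [Finset.mem_insert] at hs
      rcases hs with rfl | rfl | hs
      · exact mem_tr.2 ⟨x, y, z, xy, xz, yz, rfl⟩
      · exact mem_tr.2 ⟨x, y, w, xy, xw, yw, rfl⟩
      · obtain ⟨a, b, c, h1, h2, h3, h4⟩ := mem_tr.1 hs
        exact mem_tr.2 ⟨a, b, c, ((ha _ _).1 h1).1, ((ha _ _).1 h2).1, ((ha _ _).1 h3).1, h4⟩
    have n1 : ({x, y, w} : Finset V) ∉ tr G' := fun h => no _ h (by simp) (by simp)
    have n2 : ({x, y, z} : Finset V) ∉ insert {x, y, w} (tr G') := by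
      rw [Finset.mem_insert, not_or]
      refine ⟨fun h => ?_, fun h => no _ h (by simp) (by simp)⟩
      have : z ∈ ({x, y, w} : Finset V) := by rw [← h]; simp
      have := xz.ne; have := yz.ne
      grind
    have := Finset.card_le_card hsub
    rw [Finset.card_insert_of_notMem n2, Finset.card_insert_of_notMem n1] at this
    omega
  unfold Bd at *
  omega

theorem ed_contr {x y : V} (xy : G.Adj x y) :
    (ed G).card ≤ (ed (contr G x y)).card + 1 + (cn G x y).card := by
  classical
  let A := (ed G).filter fun e => y ∉ e
  let D : Finset V := Finset.univ.filter fun v => G.Adj y v ∧ ¬ G.Adj x v ∧ v ≠ x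
  have e1 : ed G ⊆ ((A ∪ (cn G x y).image fun v => s(y, v)) ∪ {s(x, y)}) ∪
      D.image fun v => s(y, v) := by
    have key : ∀ v, G.Adj y v → s(y, v) ∈ ((A ∪ (cn G x y).image fun v => s(y, v)) ∪ {s(x, y)}) ∪
      D.image fun v => s(y, v) := by
      intro v hv
      simp only [Finset.mem_union, Finset.mem_image, Finset.mem_singleton]
      by_cases h1 : v = x
      · subst h1; left; right; exact Sym2.eq_swap
      by_cases h2 : G.Adj x v
      · left; left; right; exact ⟨v, by simp [cn, h2, hv], rfl⟩
      · right; exact ⟨v, by simp [D, *], rfl⟩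
    intro e
    induction e using Sym2.ind with | _ u v =>
    intro h
    have h' := h
    rw [mem_ed] at h
    by_cases hu : u = y
    · subst hu; exact key v h
    by_cases hv : v = y
    · have := key u (hv ▸ h.symm)
      rwa [hv, Sym2.eq_swap (a := u) (b := y)]
    simp only [Finset.mem_union]
    left; left; left
    simp [A, h', Ne.symm hu, Ne.symm hv]
  have c1 := Finset.card_le_card e1
  have c2 := Finset.card_union_le ((A ∪ (cn G x y).image fun v => s(y, v)) ∪ {s(x, y)}) (D.image fun v => s(y, v))
  have c3 := Finset.card_union_le (A ∪ (cn G x y).image fun v => s(y, v)) {s(x, y)}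
  have c4 := Finset.card_union_le A ((cn G x y).image fun v => s(y, v))
  have c5 : ((cn G x y).image fun v => s(y, v)).card ≤ _ := Finset.card_image_le
  have c6 : (D.image fun v => s(y, v)).card ≤ _ := Finset.card_image_le
  have e2 : A ∪ D.image (fun v => s(x, v)) ⊆ ed (contr G x y) := by
    intro e
    induction e using Sym2.ind with | _ u v =>
    intro h
    rw [mem_ed]
    simp only [Finset.mem_union, Finset.mem_image] at h
    rcases h with h | ⟨w, hw, h⟩
    · simp only [A, Finset.mem_filter, mem_ed, Sym2.mem_iff, not_or] at h
      exact ⟨h.1.ne, Ne.symm h.2.1, Ne.symm h.2.2, Or.inl h.1⟩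
    · simp only [D, Finset.mem_filter, Finset.mem_univ, true_and] at hw
      rw [← SimpleGraph.mem_edgeSet, ← h, SimpleGraph.mem_edgeSet]
      exact ⟨Ne.symm hw.2.2, xy.ne, hw.1.ne.symm, Or.inr (Or.inl ⟨rfl, hw.1⟩)⟩
  have dj : Disjoint A (D.image (fun v => s(x, v))) := by
    rw [Finset.disjoint_left]
    intro e h1 h2
    simp only [Finset.mem_image] at h2
    obtain ⟨w, hw, rfl⟩ := h2
    simp only [A, D, Finset.mem_filter, mem_ed, Finset.mem_univ, true_and] at h1 hw
    exact hw.2.1 h1.1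
  have c7 := Finset.card_le_card e2
  rw [Finset.card_union_of_disjoint dj, Finset.card_image_of_injective _ (by
    intro a b h
    have h' : s(x, a) = s(x, b) := h
    exact Sym2.congr_right.1 h')] at c7
  simp only [Finset.card_singleton] at c3
  omega

theorem tr_contr {x y : V} (xy : G.Adj x y) :
    (tr (contr G x y)).card + (cn G x y).card ≤ (tr G).card + (Q G x y).card := by
  classical
  let T0 := (tr G).filter fun s => y ∉ s
  let T1 := ((tr G).filter fun s => ¬ y ∉ s).filter fun s => x ∉ s
  let T2 := ((tr G).filter fun s => ¬ y ∉ s).filter fun s => ¬ x ∉ s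
  have s1 : T0.card + _ = _ := Finset.card_filter_add_card_filter_not (s := tr G) fun s => y ∉ s
  have s2 : T1.card + T2.card = _ :=
    Finset.card_filter_add_card_filter_not (s := (tr G).filter fun s => ¬ y ∉ s) fun s => x ∉ s
  have s3 : (cn G x y).card ≤ T2.card := by
    refine Finset.card_le_card_of_injOn (fun z => {x, y, z}) ?_ ?_
    · intro z hz
      simp only [cn, Finset.coe_filter, Finset.mem_univ, true_and, Set.mem_ofPred_eq] at hz
      simp only [T2, Finset.coe_filter, Finset.mem_filter, Set.mem_ofPred_eq]
      exact ⟨⟨mem_tr.2 ⟨x, y, z, xy, hz.1, hz.2, rfl⟩, by simp⟩, by simp⟩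
    · intro z hz w hw h
      simp only [cn, Finset.coe_filter, Finset.mem_univ, true_and, Set.mem_ofPred_eq] at hz hw
      have h' : ({x, y, z} : Finset V) = {x, y, w} := h
      have : z ∈ ({x, y, w} : Finset V) := by rw [← h']; simp
      have := hz.1.ne; have := hz.2.ne
      grind
  have s4 : tr (contr G x y) ⊆ (T0 ∪ T1.image fun s => insert x (s.erase y)) ∪
      (Q G x y).image fun p => {x, p.1, p.2} := by
    intro s hs
    simp only [Finset.mem_union, Finset.mem_image]
    by_cases hx : x ∈ s
    · obtain ⟨u, v, h1, h2, h3, rfl⟩ := mem_tr_of_mem hs hx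
      obtain ⟨a1, a2, a3, a4⟩ := h1
      obtain ⟨b1, b2, b3, b4⟩ := h2
      obtain ⟨c1, c2, c3, c4⟩ := h3
      have huv : G.Adj u v := by
        rcases c4 with h | h | h
        · exact h
        · exact absurd h.1.symm a1
        · exact absurd h.1.symm b1
      have a4 : G.Adj x u ∨ G.Adj y u := by grind
      have b4 : G.Adj x v ∨ G.Adj y v := by grind
      rcases a4 with a4 | a4 <;> rcases b4 with b4 | b4
      · left; left
        simp only [T0, Finset.mem_filter]
        exact ⟨mem_tr.2 ⟨x, u, v, a4, b4, huv, rfl⟩, by grind⟩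
      · right
        exact ⟨(u, v), by simp [Q, a4, b4, huv, a3, b1.symm], rfl⟩
      · right
        exact ⟨(v, u), by simp [Q, a4, b4, huv.symm, b3, a1.symm], by grind⟩
      · left; right
        refine ⟨{y, u, v}, ?_, by grind⟩
        simp only [T1, Finset.mem_filter]
        exact ⟨⟨mem_tr.2 ⟨y, u, v, a4, b4, huv, rfl⟩, by simp⟩, by grind⟩
    · left; left
      obtain ⟨a, b, c, h1, h2, h3, rfl⟩ := mem_tr.1 hs
      simp only [Finset.mem_insert, Finset.mem_singleton, not_or] at hx
      obtain ⟨a1, a2, a3, a4⟩ := h1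
      obtain ⟨b1, b2, b3, b4⟩ := h2
      obtain ⟨c1, c2, c3, c4⟩ := h3
      simp only [T0, Finset.mem_filter]
      exact ⟨mem_tr.2 ⟨a, b, c, by grind, by grind, by grind, rfl⟩, by grind⟩
  have c1 := Finset.card_le_card s4
  have c2 := Finset.card_union_le (T0 ∪ T1.image fun s => insert x (s.erase y))
    ((Q G x y).image fun p => {x, p.1, p.2})
  have c3 := Finset.card_union_le T0 (T1.image fun s => insert x (s.erase y))
  have c5 : (T1.image fun s => insert x (s.erase y)).card ≤ _ := Finset.card_image_le
  have c6 : ((Q G x y).image fun p => ({x, p.1, p.2} : Finset V)).card ≤ _ := Finset.card_image_le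
  omega

def restr (G : SimpleGraph V) (X : Finset V) : SimpleGraph V where
  Adj u v := G.Adj u v ∧ u ∈ X ∧ v ∈ X
  symm := ⟨fun _ _ h => ⟨h.1.symm, h.2.2, h.2.1⟩⟩
  loopless := ⟨fun _ h => h.1.ne rfl⟩

theorem step_sep (pl : Pl G) (supp : ∀ u v, G.Adj u v → u ∈ S)
    (ih : ∀ (G' : SimpleGraph V) (S' : Finset V), Pl G' → (∀ u v, G'.Adj u v → u ∈ S') →
      4 ≤ S'.card → S'.card < S.card → Bd G' S') (bad : ¬ Bd G S)
    {C : Finset V} (hC : C ⊆ S) (hC3 : 3 ≤ C.card) (EC : Finset (Sym2 V)) (hEC : EC ⊆ ed G)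
    (hEC' : ∀ e ∈ EC, ∀ v ∈ e, v ∈ C)
    (hnum : ((tr G).filter (· ⊆ C)).card + 4 * C.card ≤ 2 * EC.card + 8) : NonSep G S C := by
  intro A hA hn hcl
  by_contra hne
  apply bad
  set B := (S \ C) \ A with hB
  have hBn : B.Nonempty := by
    rw [Finset.nonempty_iff_ne_empty, Ne, hB, Finset.sdiff_eq_empty_iff_subset]
    exact fun h => hne (hA.antisymm h)
  have dA : Disjoint A C := by rw [Finset.disjoint_left]; grind
  have dB : Disjoint B C := by rw [Finset.disjoint_left]; grind
  have hS : S.card = A.card + B.card + C.card := by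
    have h1 : B.card + A.card = _ := Finset.card_sdiff_add_card_eq_card hA
    have h2 := Finset.card_sdiff_add_card_eq_card hC
    omega
  have nA : (A ∪ C).card = A.card + C.card := Finset.card_union_of_disjoint dA
  have nB : (B ∪ C).card = B.card + C.card := Finset.card_union_of_disjoint dB
  have pA := Finset.card_pos.2 hn
  have pB := Finset.card_pos.2 hBn
  have iA := ih (restr G (A ∪ C)) (A ∪ C) (pl.mono fun _ _ h => h.1) (fun _ _ h => h.2.1)
    (by omega) (by omega)
  have iB := ih (restr G (B ∪ C)) (B ∪ C) (pl.mono fun _ _ h => h.1) (fun _ _ h => h.2.1)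
    (by omega) (by omega)
  have cross : ∀ u v, G.Adj u v → u ∈ A → v ∈ B → False := by
    intro u v huv hu hv
    have := hcl u hu v (by grind) huv
    grind
  have e1 : ed G ⊆ ed (restr G (A ∪ C)) ∪ ed (restr G (B ∪ C)) := by
    intro e
    induction e using Sym2.ind with | _ u v =>
    intro h
    rw [Finset.mem_union, mem_ed, mem_ed]
    rw [mem_ed] at h
    have h1 := supp _ _ h
    have h2 := supp _ _ h.symm
    have h3 := cross u v h
    have h4 := cross v u h.symm
    simp only [restr, Finset.mem_union]
    grind
  have e2 : EC ⊆ ed (restr G (A ∪ C)) ∩ ed (restr G (B ∪ C)) := by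
    intro e
    induction e using Sym2.ind with | _ u v =>
    intro h
    have h1 := hEC' _ h u (by simp)
    have h2 := hEC' _ h v (by simp)
    have h3 := hEC h
    rw [mem_ed] at h3
    simp [mem_ed, restr, h1, h2, h3]
  have e3 := Finset.card_union_add_card_inter (ed (restr G (A ∪ C))) (ed (restr G (B ∪ C)))
  have e4 := Finset.card_le_card e1
  have e5 := Finset.card_le_card e2
  have hsub : ∀ X : Finset V, ∀ s ∈ tr (restr G X), s ∈ tr G ∧ s ⊆ X := by
    intro X s hs
    obtain ⟨a, b, c, h1, h2, h3, rfl⟩ := mem_tr.1 hs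
    refine ⟨mem_tr.2 ⟨a, b, c, h1.1, h2.1, h3.1, rfl⟩, ?_⟩
    intro z hz
    simp only [Finset.mem_insert, Finset.mem_singleton] at hz
    rcases hz with rfl | rfl | rfl
    · exact h1.2.1
    · exact h1.2.2
    · exact h2.2.2
  have t1 : tr (restr G (A ∪ C)) ∪ tr (restr G (B ∪ C)) ⊆ tr G := by
    intro s hs
    rcases Finset.mem_union.1 hs with h | h
    · exact (hsub _ _ h).1
    · exact (hsub _ _ h).1
  have t2 : tr (restr G (A ∪ C)) ∩ tr (restr G (B ∪ C)) ⊆ (tr G).filter (· ⊆ C) := by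
    intro s hs
    rw [Finset.mem_inter] at hs
    have h1 := hsub _ _ hs.1
    have h2 := hsub _ _ hs.2
    rw [Finset.mem_filter]
    refine ⟨h1.1, fun z hz => ?_⟩
    have := h1.2 hz
    have := h2.2 hz
    grind
  have t3 := Finset.card_union_add_card_inter (tr (restr G (A ∪ C))) (tr (restr G (B ∪ C)))
  have t4 := Finset.card_le_card t1
  have t5 := Finset.card_le_card t2
  unfold Bd at *
  omega

theorem base_miss (supp : ∀ u v, G.Adj u v → u ∈ S)
    (h1 : ∀ x y z w, G.Adj x y → G.Adj x z → G.Adj y z → G.Adj x w → G.Adj y w → z = w)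
    (he : 5 ≤ (ed G).card) {a b c d : V} (hab : a ≠ b)
    (hS : ∀ z ∈ S, z = a ∨ z = b ∨ z = c ∨ z = d) (nab : ¬ G.Adj a b) : False := by
  have nba : ¬ G.Adj b a := fun h => nab h.symm
  have five : ed G ⊆ {s(a, c), s(a, d), s(b, c), s(b, d), s(c, d)} := by
    intro e
    induction e using Sym2.ind with | _ u v =>
    intro h
    rw [mem_ed] at h
    have := h.ne
    rcases hS u (supp _ _ h) with rfl | rfl | rfl | rfl <;>
    rcases hS v (supp _ _ h.symm) with rfl | rfl | rfl | rfl <;>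
      first
      | exact absurd rfl this
      | exact absurd h nab
      | exact absurd h nba
      | (simp; done)
      | (rw [Sym2.eq_swap]; simp; done)
  have c5 : ({s(a, c), s(a, d), s(b, c), s(b, d), s(c, d)} : Finset (Sym2 V)).card ≤ 5 :=
    Finset.card_le_five
  have eq := Finset.eq_of_subset_of_card_le five (c5.trans he)
  have ac : G.Adj a c := by rw [← mem_ed, eq]; simp
  have ad : G.Adj a d := by rw [← mem_ed, eq]; simp
  have bc : G.Adj b c := by rw [← mem_ed, eq]; simp
  have bd : G.Adj b d := by rw [← mem_ed, eq]; simp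
  have cd : G.Adj c d := by rw [← mem_ed, eq]; simp
  exact hab (h1 c d a b cd ac.symm ad.symm bc.symm bd.symm)

theorem base (supp : ∀ u v, G.Adj u v → u ∈ S)
    (h1 : ∀ x y z w, G.Adj x y → G.Adj x z → G.Adj y z → G.Adj x w → G.Adj y w → z = w)
    (hS : S.card = 4) : Bd G S := by
  by_contra bad
  have he : 5 ≤ (ed G).card := by unfold Bd at bad; omega
  obtain ⟨a, b, c, d, hab, hac, had, hbc, hbd, hcd, rfl⟩ := Finset.card_eq_four.1 hS
  have ab : G.Adj a b := by
    by_contra h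
    exact base_miss (c := c) (d := d) supp h1 he hab (by simp) h
  have ac : G.Adj a c := by
    by_contra h
    exact base_miss (c := b) (d := d) supp h1 he hac (by simp) h
  have ad : G.Adj a d := by
    by_contra h
    exact base_miss (c := b) (d := c) supp h1 he had (by simp) h
  have bc : G.Adj b c := by
    by_contra h
    exact base_miss (c := a) (d := d) supp h1 he hbc (by simp) h
  have bd : G.Adj b d := by
    by_contra h
    exact base_miss (c := a) (d := c) supp h1 he hbd (by simp) h
  exact hcd (h1 a b c d ab ac bc ad bd)

theorem bound : ∀ n m : ℕ, ∀ (G : SimpleGraph V) (S : Finset V), S.card = n → (ed G).card = m →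
    Pl G → (∀ u v, G.Adj u v → u ∈ S) → 4 ≤ S.card → Bd G S := by
  intro n
  induction n using Nat.strong_induction_on with | _ n ihn =>
  intro m
  induction m using Nat.strong_induction_on with | _ m ihm =>
  intro G S hSn hm pl supp h4
  by_contra bad
  have ih : ∀ (G' : SimpleGraph V) (S' : Finset V), Pl G' → (∀ u v, G'.Adj u v → u ∈ S') →
      4 ≤ S'.card → S'.card < S.card → Bd G' S' := by
    intro G' S' p s h hlt
    exact ihn _ (hSn ▸ hlt) _ G' S' rfl rfl p s h
  have h1 : ∀ x y z w, G.Adj x y → G.Adj x z → G.Adj y z → G.Adj x w → G.Adj y w → z = w := by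
    intro x y z w xy xz yz xw yw
    by_contra hzw
    refine bad (step_del xy xz yz xw yw hzw ?_)
    have hle : ∀ u v, (G.deleteEdges {s(x, y)}).Adj u v → G.Adj u v := fun u v h =>
      (SimpleGraph.deleteEdges_adj.1 h).1
    refine ihm _ ?_ _ S hSn rfl (pl.mono hle) (fun u v h => supp u v (hle _ _ h)) h4
    rw [← hm]
    apply Finset.card_lt_card
    rw [Finset.ssubset_iff_of_subset]
    · refine ⟨s(x, y), mem_ed.2 xy, ?_⟩
      rw [mem_ed, SimpleGraph.deleteEdges_adj]
      simp
    · intro e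
      induction e using Sym2.ind with | _ u v =>
      intro h
      exact mem_ed.2 (hle _ _ (mem_ed.1 h))
  have hS5 : 5 ≤ S.card := by
    by_contra h
    exact bad (base supp h1 (by omega))
  have crit : Crit G S := by
    refine ⟨pl, supp, h1, ?_, ?_, ?_⟩
    · intro x y xy
      by_contra hlt
      have c1 := ed_contr xy
      have c2 := tr_contr xy
      have hy : y ∈ S := supp _ _ xy.symm
      have c3 := Finset.card_erase_of_mem hy
      have c4 := ih (contr G x y) (S.erase y) (pl.contr xy) (by
        rintro u v ⟨a1, a2, a3, a4⟩
        rw [Finset.mem_erase]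
        refine ⟨a2, ?_⟩
        rcases a4 with h | h | h
        · exact supp _ _ h
        · rw [h.1]; exact supp _ _ xy
        · exact supp _ _ h.2.symm) (by omega) (by omega)
      apply bad
      unfold Bd at *
      omega
    · intro x y z xy xz yz
      have n1 := xy.ne; have n2 := xz.ne; have n3 := yz.ne
      have hc : ({x, y, z} : Finset V).card = 3 := Finset.card_eq_three.2 ⟨x, y, z, n1, n2, n3, rfl⟩
      refine step_sep pl supp ih bad ?_ (by omega) {s(x, y), s(x, z), s(y, z)} ?_ ?_ ?_
      · intro w hw
        simp only [Finset.mem_insert, Finset.mem_singleton] at hw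
        rcases hw with rfl | rfl | rfl
        · exact supp _ _ xy
        · exact supp _ _ yz
        · exact supp _ _ xz.symm
      · intro e he
        simp only [Finset.mem_insert, Finset.mem_singleton] at he
        rcases he with rfl | rfl | rfl
        · exact mem_ed.2 xy
        · exact mem_ed.2 xz
        · exact mem_ed.2 yz
      · intro e he v hv
        simp only [Finset.mem_insert, Finset.mem_singleton] at he ⊢
        rcases he with rfl | rfl | rfl <;> rw [Sym2.mem_iff] at hv <;> tauto
      · have e1 : ({s(x, y), s(x, z), s(y, z)} : Finset (Sym2 V)).card = 3 := by
          refine Finset.card_eq_three.2 ⟨_, _, _, ?_, ?_, ?_, rfl⟩ <;> simp <;> tauto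
        have e2 : ((tr G).filter (· ⊆ ({x, y, z} : Finset V))).card ≤ 1 := by
          have : (tr G).filter (· ⊆ ({x, y, z} : Finset V)) ⊆ {{x, y, z}} := by
            intro s hs
            rw [Finset.mem_filter] at hs
            rw [Finset.mem_singleton]
            obtain ⟨a, b, c, k1, k2, k3, rfl⟩ := mem_tr.1 hs.1
            refine Finset.eq_of_subset_of_card_le hs.2 ?_
            rw [hc, Finset.card_eq_three.2 ⟨a, b, c, k1.ne, k2.ne, k3.ne, rfl⟩]
          simpa using Finset.card_le_card this
        omega
    · intro x a b y xa ab by' xy xb ay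
      have n1 := xa.ne; have n2 := ab.ne; have n3 := by'.ne; have n4 := xy.ne
      have hc : ({x, y, a, b} : Finset V).card = 4 :=
        Finset.card_eq_four.2 ⟨x, y, a, b, n4, n1, xb, ay.symm, n3.symm, n2, rfl⟩
      have nxb : ¬ G.Adj x b := fun h => ay (h1 x b a y h xa ab.symm xy by')
      have nay : ¬ G.Adj a y := fun h => xb (h1 a y x b h xa.symm xy.symm ab by'.symm)
      have nbx : ¬ G.Adj b x := fun h => nxb h.symm
      have nya : ¬ G.Adj y a := fun h => nay h.symm
      refine step_sep pl supp ih bad ?_ (by omega) {s(x, a), s(a, b), s(b, y), s(x, y)} ?_ ?_ ?_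
      · intro w hw
        simp only [Finset.mem_insert, Finset.mem_singleton] at hw
        rcases hw with rfl | rfl | rfl | rfl
        · exact supp _ _ xy
        · exact supp _ _ xy.symm
        · exact supp _ _ ab
        · exact supp _ _ by'
      · intro e he
        simp only [Finset.mem_insert, Finset.mem_singleton] at he
        rcases he with rfl | rfl | rfl | rfl
        · exact mem_ed.2 xa
        · exact mem_ed.2 ab
        · exact mem_ed.2 by'
        · exact mem_ed.2 xy
      · intro e he v hv
        simp only [Finset.mem_insert, Finset.mem_singleton] at he ⊢
        rcases he with rfl | rfl | rfl | rfl <;> rw [Sym2.mem_iff] at hv <;> tauto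
      · have e1 : ({s(x, a), s(a, b), s(b, y), s(x, y)} : Finset (Sym2 V)).card = 4 := by
          refine Finset.card_eq_four.2 ⟨_, _, _, _, ?_, ?_, ?_, ?_, ?_, ?_, rfl⟩ <;> simp <;> tauto
        have e2 : (tr G).filter (· ⊆ ({x, y, a, b} : Finset V)) = ∅ := by
          rw [Finset.eq_empty_iff_forall_notMem]
          intro s hs
          rw [Finset.mem_filter] at hs
          obtain ⟨p, q, r, k1, k2, k3, rfl⟩ := mem_tr.1 hs.1
          have hp := hs.2 (show p ∈ _ by simp)
          have hq := hs.2 (show q ∈ _ by simp)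
          have hr := hs.2 (show r ∈ _ by simp)
          have m1 := k1.ne; have m2 := k2.ne; have m3 := k3.ne
          simp only [Finset.mem_insert, Finset.mem_singleton] at hp hq hr
          clear ih ihn ihm bad supp pl h1 hs
          rcases hp with rfl | rfl | rfl | rfl <;> rcases hq with rfl | rfl | rfl | rfl <;>
            first
            | exact absurd rfl m1
            | contradiction
            | (rcases hr with rfl | rfl | rfl | rfl <;>
                first
                | exact absurd rfl m2
                | exact absurd rfl m3
                | contradiction)
        rw [e2, e1, hc]
        simp
  have : (ed G).Nonempty := by
    rw [← Finset.card_pos]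
    unfold Bd at bad
    omega
  obtain ⟨e, he⟩ := this
  induction e using Sym2.ind with | _ x y =>
  exact crit.false (mem_ed.1 he)

end Aux
namespace Aux

theorem hall {V : Type*} [Fintype V] [DecidableEq V] (G : SimpleGraph V) (hG : Pl G)
    (V₁ : Set V) (hbip : ∀ u v, G.Adj u v → (u ∈ V₁ ↔ v ∉ V₁)) (s : Finset (Sym2 V))
    (hs : ∀ e ∈ s, e ∈ G.edgeSet) (S : Finset V) (hS : ∀ e ∈ s, ∀ v ∈ e, v ∈ S) :
    s.card ≤ 2 * S.card := by
  rcases Nat.lt_or_ge S.card 4 with h4 | h4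
  · have h1 : s ⊆ S.sym2 := by
      intro e he
      rw [Finset.mem_sym2_iff]
      exact hS e he
    have h2 := Finset.card_le_card h1
    rw [Finset.card_sym2] at h2
    refine h2.trans ?_
    generalize S.card = k at h4
    interval_cases k <;> decide
  · let G' : SimpleGraph V := SimpleGraph.fromEdgeSet (s : Set (Sym2 V))
    have ha : ∀ u v, G'.Adj u v → s(u, v) ∈ s := by
      intro u v h
      simpa using ((SimpleGraph.fromEdgeSet_adj _).1 h).1
    have hle : ∀ u v, G'.Adj u v → G.Adj u v := by
      intro u v h
      simpa using hs _ (ha u v h)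
    have hb := bound _ _ G' S rfl rfl (hG.mono hle)
      (fun u v h => hS _ (ha u v h) u (by simp)) h4
    have he : s ⊆ ed G' := by
      intro e he
      induction e with
      | _ u v =>
        rw [mem_ed]
        have h := hs _ he
        rw [SimpleGraph.mem_edgeSet] at h
        exact (SimpleGraph.fromEdgeSet_adj _).2 ⟨by simpa using he, h.ne⟩
    have ht : tr G' = ∅ := by
      rw [Finset.eq_empty_iff_forall_notMem]
      intro t ht
      obtain ⟨a, b, c, h1, h2, h3, -⟩ := mem_tr.1 ht
      have := hbip _ _ (hle _ _ h1)
      have := hbip _ _ (hle _ _ h2)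
      have := hbip _ _ (hle _ _ h3)
      tauto
    have := Finset.card_le_card he
    unfold Bd at hb
    rw [ht] at hb
    simp at hb
    omega

theorem exists_label {V : Type*} [Fintype V] (G : SimpleGraph V) (hG : Pl G)
    (V₁ : Set V) (hbip : ∀ u v, G.Adj u v → (u ∈ V₁ ↔ v ∉ V₁)) :
    ∃ f : G.edgeSet → V × Fin 2, Function.Injective f ∧ ∀ e : G.edgeSet, (f e).1 ∈ (e : Sym2 V) := by
  classical
  have key := (Finset.all_card_le_biUnion_card_iff_exists_injective
    (fun e : G.edgeSet => (Finset.univ.filter fun v : V => v ∈ (e : Sym2 V)) ×ˢ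
      (Finset.univ : Finset (Fin 2)))).1 (by
    intro s
    have h := hall G hG V₁ hbip (s.image Subtype.val) (by
      intro e he
      obtain ⟨e', _, rfl⟩ := Finset.mem_image.1 he
      exact e'.2) (Finset.univ.filter fun v => ∃ e ∈ s, v ∈ (e : Sym2 V)) (by
      intro e he v hv
      obtain ⟨e', h', rfl⟩ := Finset.mem_image.1 he
      simp only [Finset.mem_filter, Finset.mem_univ, true_and]
      exact ⟨e', h', hv⟩)
    rw [Finset.card_image_of_injective _ Subtype.val_injective] at h
    refine h.trans ?_
    have : 2 * (Finset.univ.filter fun v => ∃ e ∈ s, v ∈ (e : Sym2 V)).card =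
      ((Finset.univ.filter fun v => ∃ e ∈ s, v ∈ (e : Sym2 V)) ×ˢ
        (Finset.univ : Finset (Fin 2))).card := by
      rw [Finset.card_product]; simp [mul_comm]
    rw [this]
    apply Finset.card_le_card
    rintro ⟨v, i⟩ hv
    simp only [Finset.mem_product, Finset.mem_filter, Finset.mem_univ, true_and, and_true,
      Finset.mem_biUnion] at hv ⊢
    exact hv)
  obtain ⟨f, hf, h⟩ := key
  refine ⟨f, hf, fun e => ?_⟩
  have := h e
  simp only [Finset.mem_product, Finset.mem_filter, Finset.mem_univ, true_and, and_true] at this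
  exact this

/-- edges labelled `i` whose chosen endpoint lies in `A` -/
def cls {V : Type*} {G : SimpleGraph V} (f : G.edgeSet → V × Fin 2) (A : Set V) (i : Fin 2) :
    Set (Sym2 V) := {e | ∃ h : e ∈ G.edgeSet, (f ⟨e, h⟩).1 ∈ A ∧ (f ⟨e, h⟩).2 = i}

theorem cls_disj {V : Type*} {G : SimpleGraph V} (f : G.edgeSet → V × Fin 2) (A B : Set V)
    (i j : Fin 2) (h : Disjoint A B ∨ i ≠ j) : Disjoint (cls f A i) (cls f B j) := by
  rw [Set.disjoint_left]
  rintro e ⟨h1, h2, h3⟩ ⟨_, h4, h5⟩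
  rcases h with h | h
  · exact Set.disjoint_left.1 h h2 h4
  · exact h (h3.symm.trans h5)

theorem cls_star {V : Type*} {G : SimpleGraph V} (f : G.edgeSet → V × Fin 2)
    (hf : Function.Injective f) (hm : ∀ e : G.edgeSet, (f e).1 ∈ (e : Sym2 V)) (C : Set V)
    (hbip : ∀ u v, G.Adj u v → (u ∈ C ↔ v ∉ C)) (i : Fin 2) :
    IsStarForestWithCenters (cls f Cᶜ i) C := by
  have key : ∀ e (h : e ∈ G.edgeSet), (f ⟨e, h⟩).1 ∉ C → ∃ u, e = s(u, (f ⟨e, h⟩).1) ∧ u ∈ C := by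
    intro e h hC
    have h1 := hm ⟨e, h⟩
    obtain ⟨u, hu⟩ := Sym2.mem_iff_exists.1 h1
    have hu : e = s((f ⟨e, h⟩).1, u) := hu
    have hadj : G.Adj (f ⟨e, h⟩).1 u := by
      rw [← SimpleGraph.mem_edgeSet, ← hu]; exact h
    refine ⟨u, hu.trans Sym2.eq_swap, ?_⟩
    have := hbip _ _ hadj
    tauto
  constructor
  · rintro e ⟨h, h1, h2⟩
    obtain ⟨u, hu, hC⟩ := key e h h1
    exact ⟨u, _, hu, hC, h1⟩
  · intro v hv
    have aux : ∀ e (h : e ∈ G.edgeSet), (f ⟨e, h⟩).1 ∉ C → v ∈ e → (f ⟨e, h⟩).1 = v := by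
      intro e h h1 hve
      obtain ⟨u, hu, hC⟩ := key e h h1
      rw [hu] at hve
      rcases Sym2.mem_iff.1 hve with h3 | h3
      · exact absurd (h3 ▸ hC) hv
      · exact h3.symm
    rintro e ⟨⟨h, h1, h2⟩, h3⟩ e' ⟨⟨h', h1', h2'⟩, h3'⟩
    have := hf (a₁ := ⟨e, h⟩) (a₂ := ⟨e', h'⟩)
      (Prod.ext ((aux e h h1 h3).trans (aux e' h' h1' h3').symm) (h2.trans h2'.symm))
    exact congrArg Subtype.val this

end Aux

/-- Every bipartite planar graph can be edge-partitioned into four star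
forests, two of which have all their star centers in the first part `V₁` of
the bipartition and two in the second part `V \ V₁`. -/
theorem stmt_6 {V : Type*} [Fintype V] (G : SimpleGraph V) (hG : G.IsPlanar)
    (V₁ : Set V) (hbip : ∀ u v, G.Adj u v → (u ∈ V₁ ↔ v ∉ V₁)) :
    ∃ (F : Fin 4 → Set (Sym2 V)) (C : Fin 4 → Set V),
      (∀ i, IsStarForestWithCenters (F i) (C i)) ∧
      (Pairwise fun i j => Disjoint (F i) (F j)) ∧
      (F 0 ∪ F 1 ∪ F 2 ∪ F 3 = G.edgeSet) ∧
      C 0 ⊆ V₁ ∧ C 1 ⊆ V₁ ∧ C 2 ⊆ V₁ᶜ ∧ C 3 ⊆ V₁ᶜ := by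
  obtain ⟨f, hf, hm⟩ := Aux.exists_label G
    ⟨fun m => hG.1 m.hasMinor, fun m => hG.2 m.hasMinor⟩ V₁ hbip
  have hb2 : ∀ u v, G.Adj u v → (u ∈ V₁ᶜ ↔ v ∉ V₁ᶜ) := by
    intro u v h
    have := hbip u v h
    simp only [Set.mem_compl_iff]
    tauto
  have d : Disjoint V₁ᶜ V₁ᶜᶜ := disjoint_compl_right
  refine ⟨![Aux.cls f V₁ᶜ 0, Aux.cls f V₁ᶜ 1, Aux.cls f V₁ᶜᶜ 0, Aux.cls f V₁ᶜᶜ 1],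
    ![V₁, V₁, V₁ᶜ, V₁ᶜ], ?_, ?_, ?_, subset_rfl, subset_rfl, subset_rfl, subset_rfl⟩
  · intro i
    fin_cases i
    · exact Aux.cls_star f hf hm _ hbip 0
    · exact Aux.cls_star f hf hm _ hbip 1
    · exact Aux.cls_star f hf hm _ hb2 0
    · exact Aux.cls_star f hf hm _ hb2 1
  · intro i j hij
    fin_cases i <;> fin_cases j <;> first
      | exact absurd rfl hij
      | exact Aux.cls_disj f _ _ _ _ (Or.inl d)
      | exact Aux.cls_disj f _ _ _ _ (Or.inl d.symm)
      | exact Aux.cls_disj f _ _ _ _ (Or.inr (by decide))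
  · change Aux.cls f V₁ᶜ 0 ∪ Aux.cls f V₁ᶜ 1 ∪ Aux.cls f V₁ᶜᶜ 0 ∪ Aux.cls f V₁ᶜᶜ 1 = _
    ext e
    constructor
    · rintro (((⟨h, -⟩ | ⟨h, -⟩) | ⟨h, -⟩) | ⟨h, -⟩) <;> exact h
    · intro h
      have h2 : (f ⟨e, h⟩).2 = 0 ∨ (f ⟨e, h⟩).2 = 1 := by
        generalize (f ⟨e, h⟩).2 = k
        fin_cases k <;> simp
      by_cases h1 : (f ⟨e, h⟩).1 ∈ V₁ᶜ
      · rcases h2 with h2 | h2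
        · exact Or.inl (Or.inl (Or.inl ⟨h, h1, h2⟩))
        · exact Or.inl (Or.inl (Or.inr ⟨h, h1, h2⟩))
      · rcases h2 with h2 | h2
        · exact Or.inl (Or.inr ⟨h, h1, h2⟩)
        · exact Or.inr ⟨h, h1, h2⟩
end

section
/- Every connected graph with n vertices and at most n edges can be edge-partitioned into two subgraphs, one of which is a star forest and the other of which is a vertex-disjoint union of a star forest and at most one cycle. -/
open SimpleGraph

/-- `F` is a star forest: a vertex-disjoint union of stars. -/
def IsStarForest {V : Type*} (F : Set (Sym2 V)) : Prop :=
  ∃ C : Set V, IsStarForestWithCenters F C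


lemma exists_depth {V : Type*} (G : SimpleGraph V) (hconn : G.Connected) (S : Set V)
    (hS : S.Nonempty) : ∃ (d : V → ℕ) (p : V → V), (∀ v ∈ S, d v = 0) ∧
      ∀ v ∉ S, G.Adj v (p v) ∧ d v = d (p v) + 1 := by
  classical
  have hex : ∀ v, ∃ k, ∃ s ∈ S, ∃ w : G.Walk v s, w.length = k := by
    intro v
    obtain ⟨s, hs⟩ := hS
    obtain ⟨w⟩ := hconn.preconnected v s
    exact ⟨_, s, hs, w, rfl⟩
  let d : V → ℕ := fun v => Nat.find (hex v)
  have key : ∀ v, v ∉ S → ∃ u, G.Adj v u ∧ d v = d u + 1 := by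
    intro v hv
    obtain ⟨s, hs, w, hw⟩ := Nat.find_spec (hex v)
    cases w with
    | nil => exact absurd hs hv
    | @cons _ u _ h q =>
      refine ⟨u, h, ?_⟩
      have h1 : d u ≤ q.length := Nat.find_min' (hex u) ⟨s, hs, q, rfl⟩
      obtain ⟨s', hs', w', hw'⟩ := Nat.find_spec (hex u)
      have h2 : d v ≤ w'.length + 1 :=
        Nat.find_min' (hex v) ⟨s', hs', Walk.cons h w', rfl⟩
      have h3 : d v = q.length + 1 := hw.symm
      have h4 : w'.length = d u := hw'
      omega
  refine ⟨d, fun v => if h : v ∈ S then v else (key v h).choose, ?_, ?_⟩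
  · intro v hv
    have : d v ≤ 0 := Nat.find_min' (hex v) ⟨v, hv, Walk.nil, rfl⟩
    omega
  · intro v hv
    simp only [hv, dite_false]
    exact (key v hv).choose_spec

lemma main_aux {V : Type*} [Fintype V] [DecidableEq V]
    (G : SimpleGraph V) [DecidableRel G.Adj] (hconn : G.Connected)
    (S : Finset V) (hS : S.Nonempty) (Cy : Finset (Sym2 V))
    (hCG : Cy ⊆ G.edgeFinset) (hCS : ∀ e ∈ Cy, ∀ x ∈ e, x ∈ S)
    (hcard : G.edgeFinset.card + S.card ≤ Fintype.card V + Cy.card) :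
    ∃ A B : Set (Sym2 V),
      Disjoint A B ∧ A ∪ B = G.edgeSet ∧ IsStarForest A ∧
      ∃ SF : Set (Sym2 V),
        Disjoint SF (Cy : Set (Sym2 V)) ∧ SF ∪ Cy = B ∧ IsStarForest SF ∧
        (∀ x : V, (∃ e ∈ SF, x ∈ e) → ¬ ∃ e ∈ (Cy : Set (Sym2 V)), x ∈ e) := by
  obtain ⟨d, p, hd, hp⟩ := exists_depth G hconn (S : Set V) hS
  simp only [Finset.mem_coe] at hd hp
  have inj : ∀ v ∉ S, ∀ w ∉ S, s(v, p v) = s(w, p w) → v = w := by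
    intro v hv w hw h
    rw [Sym2.eq_iff] at h
    rcases h with h | ⟨h1, h2⟩
    · exact h.1
    · have := (hp v hv).2
      have h3 := (hp w hw).2
      rw [h2] at this
      rw [← h1] at h3
      omega
  let P : Finset (Sym2 V) := Sᶜ.image (fun v => s(v, p v))
  have hPc : P.card = Sᶜ.card := Finset.card_image_of_injOn (by
    intro v hv w hw h
    exact inj v (by simpa using hv) w (by simpa using hw) h)
  have hPd : Disjoint P Cy := by
    rw [Finset.disjoint_left]
    intro e he hc
    obtain ⟨v, hv, rfl⟩ := Finset.mem_image.1 he
    exact (Finset.mem_compl.1 hv) (hCS _ hc v (by simp))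
  have hPG : P ⊆ G.edgeFinset := by
    intro e he
    obtain ⟨v, hv, rfl⟩ := Finset.mem_image.1 he
    simpa using (hp v (Finset.mem_compl.1 hv)).1
  have hall : P ∪ Cy = G.edgeFinset := by
    apply Finset.eq_of_subset_of_card_le (Finset.union_subset hPG hCG)
    rw [Finset.card_union_of_disjoint hPd, hPc]
    have := Finset.card_add_card_compl S
    omega
  have hE : ∀ e, e ∈ G.edgeSet ↔ (∃ v ∉ S, s(v, p v) = e) ∨ e ∈ Cy := by
    intro e
    rw [← mem_edgeFinset, ← hall]
    simp [P]
  have hnC : ∀ v ∉ S, s(v, p v) ∉ Cy := fun v hv h => hv (hCS _ h v (by simp))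
  let A : Set (Sym2 V) := {e | ∃ v ∉ S, d v % 2 = 1 ∧ s(v, p v) = e}
  let F : Set (Sym2 V) := {e | ∃ v ∉ S, d v % 2 = 0 ∧ s(v, p v) = e}
  have star : ∀ i < 2, IsStarForest {e | ∃ v ∉ S, d v % 2 = i ∧ s(v, p v) = e} := by
    intro i hi
    refine ⟨{v | d v % 2 ≠ i}, ?_, ?_⟩
    · rintro e ⟨v, hv, h1, rfl⟩
      refine ⟨p v, v, Sym2.eq_swap, ?_, ?_⟩
      · have := (hp v hv).2
        simp only [Set.mem_setOf_eq]
        omega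
      · simpa using h1
    · intro v hv
      have aux : ∀ e, (∃ v ∉ S, d v % 2 = i ∧ s(v, p v) = e) → v ∈ e → e = s(v, p v) := by
        rintro e ⟨w, hw, h1, rfl⟩ hm
        rcases Sym2.mem_iff.1 hm with h | h
        · rw [h]
        · exfalso
          have := (hp w hw).2
          simp only [Set.mem_setOf_eq, not_not] at hv
          rw [h] at hv
          omega
      rintro e ⟨he, hm⟩ e' ⟨he', hm'⟩
      rw [aux e he hm, aux e' he' hm']
  refine ⟨A, F ∪ Cy, ?_, ?_, star 1 (by omega), F, ?_, rfl, star 0 (by omega), ?_⟩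
  · rw [Set.disjoint_left]
    rintro e ⟨v, hv, h1, rfl⟩ (⟨w, hw, h2, h3⟩ | h)
    · have := inj w hw v hv h3
      subst this
      omega
    · exact hnC v hv h
  · ext e
    rw [hE]
    constructor
    · rintro (⟨v, hv, h1, h⟩ | ⟨v, hv, h1, h⟩ | h)
      · exact Or.inl ⟨v, hv, h⟩
      · exact Or.inl ⟨v, hv, h⟩
      · exact Or.inr h
    · rintro (⟨v, hv, h⟩ | h)
      · rcases Nat.mod_two_eq_zero_or_one (d v) with h1 | h1
        · exact Or.inr (Or.inl ⟨v, hv, h1, h⟩)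
        · exact Or.inl ⟨v, hv, h1, h⟩
      · exact Or.inr (Or.inr h)
  · rw [Set.disjoint_left]
    rintro e ⟨v, hv, h1, rfl⟩ h
    exact hnC v hv h
  · rintro x ⟨e, ⟨v, hv, h1, rfl⟩, hx⟩ ⟨e', he', hx'⟩
    have hxS := hCS e' he' x hx'
    have h0 := hd x hxS
    have := (hp v hv).2
    rcases Sym2.mem_iff.1 hx with h | h
    · exact hv (h ▸ hxS)
    · rw [h] at h0
      omega

theorem stmt_8 {V : Type*} [Fintype V] [DecidableEq V]
    (G : SimpleGraph V) [DecidableRel G.Adj]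
    (hconn : G.Connected) (hm : G.edgeFinset.card ≤ Fintype.card V) :
    ∃ A B : Set (Sym2 V),
      Disjoint A B ∧ A ∪ B = G.edgeSet ∧ IsStarForest A ∧
      ∃ SF Cy : Set (Sym2 V),
        Disjoint SF Cy ∧ SF ∪ Cy = B ∧ IsStarForest SF ∧
        (Cy = ∅ ∨ ∃ (v : V) (w : G.Walk v v), w.IsCycle ∧ Cy = {e | e ∈ w.edges}) ∧
        (∀ x : V, (∃ e ∈ SF, x ∈ e) → ¬ ∃ e ∈ Cy, x ∈ e) := by
  by_cases hac : G.IsAcyclic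
  · have ht : G.IsTree := ⟨hconn, hac⟩
    obtain ⟨r⟩ := hconn.nonempty
    have hc := ht.card_edgeFinset
    obtain ⟨A, B, h1, h2, h3, SF, h4, h5, h6, h7⟩ := main_aux G hconn {r} (by simp) ∅
      (by simp) (by simp) (by simp; omega)
    exact ⟨A, B, h1, h2, h3, SF, _, h4, h5, h6, Or.inl (by simp), h7⟩
  · unfold SimpleGraph.IsAcyclic at hac
    push Not at hac
    obtain ⟨v, w, hw⟩ := hac
    have hlen : w.edges.toFinset.card = w.length := by
      rw [List.toFinset_card_of_nodup hw.edges_nodup, Walk.length_edges]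
    have hs : w.support.toFinset.card ≤ w.length := by
      have : w.support.toFinset = w.support.tail.toFinset := by
        ext x
        simp only [List.mem_toFinset]
        constructor
        · intro hx
          rw [Walk.mem_support_iff] at hx
          rcases hx with rfl | hx
          · exact Walk.end_mem_tail_support hw.not_nil
          · exact hx
        · exact List.mem_of_mem_tail
      rw [this]
      refine (List.toFinset_card_le _).trans ?_
      simp
    obtain ⟨A, B, h1, h2, h3, SF, h4, h5, h6, h7⟩ := main_aux G hconn w.support.toFinset
      ⟨v, by simp⟩ w.edges.toFinset
      (by
        intro e he
        rw [mem_edgeFinset]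
        exact w.edges_subset_edgeSet (by simpa using he))
      (by
        intro e he x hx
        rw [List.mem_toFinset] at he ⊢
        exact Walk.mem_support_of_mem_edges he hx) (by omega)
    exact ⟨A, B, h1, h2, h3, SF, _, h4, h5, h6, Or.inr ⟨v, w, hw, by ext; simp⟩, h7⟩
end
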